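/- Suppose |d|_p = 1/p (the ramified case), and let β : ℕ → ℝ be determined by β(0) = 1, β(1) = (λ−1)/q, and q·β(k+2) − λ·β(k+1) + β(k) = 0 for all k. Then there exists s₀ ∈ ℝ such that for every real s > s₀ the function f_s is integrable on V_d(ℤ_p) and ∫_{V_d(ℤ_p)} f_s = (1/2)·(1−q⁻¹)·(1−q⁻²)³·q^{1−s}·(1−q^{1−2s})⁻¹·(1−(q⁻¹λ²−1)·q^{1−2s}+(q⁻¹λ²−1)·q^{2−4s}−q^{3−6s})⁻¹·(1 + q^{1−2s}). -/

import Mathlib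

open Matrix MeasureTheory

noncomputable instance (p : ℕ) [Fact p.Prime] : MeasurableSpace ℚ_[p] := borel _
instance (p : ℕ) [Fact p.Prime] : BorelSpace ℚ_[p] := ⟨rfl⟩
noncomputable instance (p : ℕ) [Fact p.Prime] :
    MeasurableSpace (Matrix (Fin 2) (Fin 2) ℚ_[p]) :=
  inferInstanceAs (MeasurableSpace (Fin 2 → Fin 2 → ℚ_[p]))

/-- `V = M₂(ℚ_p) × M₂(ℚ_p)`. -/
abbrev VV (p : ℕ) [Fact p.Prime] :=
  Matrix (Fin 2) (Fin 2) ℚ_[p] × Matrix (Fin 2) (Fin 2) ℚ_[p]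

/-- `P(x,y) = −det(x·y^ι − y·x^ι)`, where `m^ι` is the adjugate. -/
noncomputable def Pq {p : ℕ} [Fact p.Prime] (v : VV p) : ℚ_[p] :=
  - (v.1 * v.2.adjugate - v.2 * v.1.adjugate).det

/-- The equivariant map `F₁ : V → ℚ_p³`. -/
noncomputable def Fmap1 {p : ℕ} [Fact p.Prime] (v : VV p) : ℚ_[p] × ℚ_[p] × ℚ_[p] :=
  (v.1 0 0 * v.2 0 1 - v.1 0 1 * v.2 0 0,
   (v.1 0 0 * v.2 1 1 - v.1 0 1 * v.2 1 0) + (v.1 1 0 * v.2 0 1 - v.1 1 1 * v.2 0 0),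
   v.1 1 0 * v.2 1 1 - v.1 1 1 * v.2 1 0)

/-- The equivariant map `F₂ : V → ℚ_p³`. -/
noncomputable def Fmap2 {p : ℕ} [Fact p.Prime] (v : VV p) : ℚ_[p] × ℚ_[p] × ℚ_[p] :=
  (v.1 0 0 * v.2 1 0 - v.2 0 0 * v.1 1 0,
   (v.1 0 0 * v.2 1 1 - v.2 0 1 * v.1 1 0) + (v.1 0 1 * v.2 1 0 - v.2 0 0 * v.1 1 1),
   v.1 0 1 * v.2 1 1 - v.2 0 1 * v.1 1 1)

/-- The maximum of the `p`-adic absolute values of the three coordinates. -/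
noncomputable def mcoord {p : ℕ} [Fact p.Prime] (t : ℚ_[p] × ℚ_[p] × ℚ_[p]) : ℝ :=
  max (max ‖t.1‖ ‖t.2.1‖) ‖t.2.2‖

/-- `V_d(ℤ_p)`: integral pairs whose invariant `P` lies in `d·(ℚ_pˣ)²`. -/
def Vd (p : ℕ) [Fact p.Prime] (d : ℤ_[p]) : Set (VV p) :=
  {v | (∀ i j, ‖v.1 i j‖ ≤ 1) ∧ (∀ i j, ‖v.2 i j‖ ≤ 1) ∧
    ∃ c : ℚ_[p], c ≠ 0 ∧ Pq v = (d : ℚ_[p]) * c ^ 2}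

open Classical in
/-- The integrand `f_s`. -/
noncomputable def fs (p : ℕ) [Fact p.Prime] (d : ℤ_[p]) (β : ℕ → ℝ) (s : ℝ)
    (v : VV p) : ℝ :=
  if h : Pq v ≠ 0 ∧
      (∃ l : ℕ, ‖(d : ℚ_[p])‖ * mcoord (Fmap1 v) ^ 2 = ‖Pq v‖ * (p : ℝ) ^ (2 * l)) ∧
      (∃ l : ℕ, ‖(d : ℚ_[p])‖ * mcoord (Fmap2 v) ^ 2 = ‖Pq v‖ * (p : ℝ) ^ (2 * l)) then
    β h.2.1.choose * β h.2.2.choose * ‖Pq v‖ ^ (s - 2)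
  else 0



namespace Z19
open scoped ENNReal
open Metric

variable {p : ℕ} [hpp : Fact p.Prime]

/-- closed unit ball is compact with nonempty interior -/
noncomputable def unitK (p : ℕ) [Fact p.Prime] : TopologicalSpace.PositiveCompacts ℚ_[p] where
  carrier := closedBall 0 1
  isCompact' := isCompact_closedBall _ _
  interior_nonempty' := ⟨0, interior_mono ball_subset_closedBall
    (by rw [isOpen_ball.interior_eq]; simp)⟩

noncomputable instance instMS (p : ℕ) [Fact p.Prime] : MeasureSpace ℚ_[p] where
  volume := Measure.addHaarMeasure (unitK p)

instance instHaar (p : ℕ) [Fact p.Prime] : (volume : Measure ℚ_[p]).IsAddHaarMeasure :=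
  inferInstanceAs (Measure.addHaarMeasure (unitK p)).IsAddHaarMeasure

theorem vol_ball : (volume : Measure ℚ_[p]) (closedBall 0 1) = 1 :=
  Measure.addHaarMeasure_self (K₀ := unitK p)

theorem p_pos : (0 : ℝ) < p := by exact_mod_cast hpp.out.pos
theorem p_gt_one : (1 : ℝ) < p := by exact_mod_cast hpp.out.one_lt
theorem p_ne : (p : ℝ) ≠ 0 := p_pos.ne'
theorem pq_ne : (p : ℚ_[p]) ≠ 0 := by exact_mod_cast hpp.out.ne_zero

theorem map_mul_exists (a : ℚ_[p]) (ha : a ≠ 0) : ∃ c : NNReal,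
    Measure.map (fun x => a * x) (volume : Measure ℚ_[p]) = (c : ℝ≥0∞) • volume := by
  have h : (Measure.map (fun x => a * x) (volume : Measure ℚ_[p])).IsAddHaarMeasure := by
    have := (ContinuousLinearEquiv.unitsEquivAut ℚ_[p] (Units.mk0 a ha)).isAddHaarMeasure_map
      (volume : Measure ℚ_[p])
    have he : (fun x => a * x) =
        ⇑(ContinuousLinearEquiv.unitsEquivAut ℚ_[p] (Units.mk0 a ha)) := by
      funext x
      simp [ContinuousLinearEquiv.unitsEquivAut, mul_comm]
    rw [he]; exact this
  exact ⟨_, Measure.isAddLeftInvariant_eq_smul _ _⟩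

theorem lt_iff_le (x : ℚ_[p]) : ‖x‖ < 1 ↔ ‖x‖ ≤ (p : ℝ)⁻¹ := by
  have := Padic.norm_le_pow_iff_norm_lt_pow_add_one x (-1)
  simpa using this.symm

theorem vol_small : (volume : Measure ℚ_[p]) (closedBall 0 (p : ℝ)⁻¹) = (p : ℝ≥0∞)⁻¹ := by
  have hU : closedBall (0 : ℚ_[p]) 1 =
      ⋃ i ∈ Finset.range p, closedBall ((i : ℕ) : ℚ_[p]) (p : ℝ)⁻¹ := by
    ext x
    simp only [mem_closedBall, dist_zero_right, Set.mem_iUnion, Finset.mem_range, exists_prop,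
      dist_eq_norm]
    constructor
    · intro hx
      obtain ⟨n, hn, h⟩ := PadicInt.exists_mem_range (p := p) (⟨x, by simpa using hx⟩ : ℤ_[p])
      refine ⟨n, hn, ?_⟩
      rw [PadicInt.maximalIdeal_eq_span_p, Ideal.mem_span_singleton] at h
      have h2 := (PadicInt.norm_lt_one_iff_dvd _).2 h
      rw [← lt_iff_le]
      exact h2
    · rintro ⟨i, hi, h⟩
      have h1 : ‖((i : ℕ) : ℚ_[p])‖ ≤ 1 := by
        exact_mod_cast Padic.norm_int_le_one (p := p) (i : ℤ)
      have := Padic.nonarchimedean (x - (i : ℚ_[p])) (i : ℚ_[p])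
      rw [sub_add_cancel] at this
      rw [sub_zero]
      refine this.trans (max_le (h.trans ?_) h1)
      exact inv_le_one_of_one_le₀ p_gt_one.le
  have h1 := vol_ball (p := p)
  rw [hU, measure_biUnion_finset] at h1
  · have : ∀ i ∈ Finset.range p, (volume : Measure ℚ_[p]) (closedBall ((i : ℕ) : ℚ_[p]) (p : ℝ)⁻¹)
        = (volume : Measure ℚ_[p]) (closedBall 0 (p : ℝ)⁻¹) := by
      intro i _
      rw [← measure_preimage_add_right (volume : Measure ℚ_[p]) (-(i : ℚ_[p])) (closedBall 0 _)]
      congr 1; ext x; simp [dist_eq_norm, sub_eq_add_neg]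
    rw [Finset.sum_congr rfl this] at h1
    simp only [Finset.sum_const, Finset.card_range, nsmul_eq_mul] at h1
    rw [mul_comm] at h1
    exact ENNReal.eq_inv_of_mul_eq_one_left h1
  · intro i hi j hj hij
    simp only [Function.onFun]
    rw [Set.disjoint_left]
    intro x hx hy
    simp only [mem_closedBall, dist_eq_norm] at hx hy
    rw [← lt_iff_le] at hx hy
    have h3 : ‖((i : ℕ) : ℚ_[p]) - (j : ℕ)‖ < 1 := by
      have := Padic.nonarchimedean (x - (j : ℚ_[p])) (-(x - (i : ℚ_[p])))
      rw [norm_neg] at this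
      have h4 : x - (j : ℚ_[p]) + -(x - (i : ℚ_[p])) = (i : ℚ_[p]) - j := by ring
      rw [h4] at this
      exact this.trans_lt (max_lt hy hx)
    have h5 : ‖(((i : ℤ) - (j : ℤ) : ℤ) : ℚ_[p])‖ < 1 := by push_cast; exact_mod_cast h3
    rw [Padic.norm_intCast_lt_one_iff] at h5
    simp only [Finset.coe_range, Set.mem_Iio] at hi hj
    apply hij
    have h6 : (i : ℤ) % p = (j : ℤ) % p := (Int.emod_eq_emod_iff_emod_sub_eq_zero).2
      (Int.emod_eq_zero_of_dvd h5)
    rw [Int.emod_eq_of_lt (by positivity) (by exact_mod_cast hi),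
      Int.emod_eq_of_lt (by positivity) (by exact_mod_cast hj)] at h6
    exact_mod_cast h6
  · intro i _; exact measurableSet_closedBall
end Z19

namespace Z19
open scoped ENNReal
open Metric

variable {p : ℕ} [hpp : Fact p.Prime]

theorem lint_mul_aux (a : ℚ_[p]) (ha : a ≠ 0) : ∃ c : NNReal, ∀ f : ℚ_[p] → ℝ≥0∞,
    ∫⁻ x, f (a * x) = c * ∫⁻ x, f x := by
  obtain ⟨c, hc⟩ := map_mul_exists a ha
  refine ⟨c, fun f => ?_⟩
  have he : MeasurableEmbedding (fun x : ℚ_[p] => a * x) :=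
    (Homeomorph.mulLeft₀ a ha).measurableEmbedding
  rw [← he.lintegral_map, hc, lintegral_smul_measure]
  rfl

theorem ind_lint (S : Set ℚ_[p]) (hS : MeasurableSet S) :
    ∫⁻ x, S.indicator 1 x = (volume : Measure ℚ_[p]) S := by
  rw [lintegral_indicator_one hS]

theorem vol_preim (a : ℚ_[p]) (ha : a ≠ 0) : ∃ c : NNReal, 
    (∀ f : ℚ_[p] → ℝ≥0∞, ∫⁻ x, f (a * x) = c * ∫⁻ x, f x) ∧
    ∀ r : ℝ, (volume : Measure ℚ_[p]) (closedBall 0 (r / ‖a‖)) =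
      c * (volume : Measure ℚ_[p]) (closedBall 0 r) := by
  obtain ⟨c, hc⟩ := lint_mul_aux a ha
  refine ⟨c, hc, fun r => ?_⟩
  have := hc ((closedBall (0 : ℚ_[p]) r).indicator 1)
  rw [← ind_lint _ measurableSet_closedBall, ← ind_lint _ measurableSet_closedBall, ← this]
  refine lintegral_congr fun x => ?_
  classical
  simp only [Set.indicator_apply, Pi.one_apply, mem_closedBall, dist_zero_right, norm_mul]
  simp only [le_div_iff₀ (norm_pos_iff.2 ha), mul_comm]

theorem vol_zpow (n : ℤ) : (volume : Measure ℚ_[p]) (closedBall 0 ((p : ℝ) ^ n)) =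
    ENNReal.ofReal ((p : ℝ) ^ n) := by
  obtain ⟨c, hc, h⟩ := vol_preim (p : ℚ_[p]) pq_ne
  have hn : ‖(p : ℚ_[p])‖ = (p : ℝ)⁻¹ := Padic.norm_p
  have hc1 : (c : ℝ≥0∞) = ENNReal.ofReal p := by
    have := h (p : ℝ)⁻¹
    rw [hn, div_self (inv_ne_zero p_ne), vol_ball, vol_small] at this
    have := ENNReal.eq_inv_of_mul_eq_one_left this.symm
    rw [this, inv_inv, ENNReal.ofReal_natCast]
  rw [hc1, hn] at h
  induction n using Int.induction_on with
  | zero => simpa using vol_ball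
  | succ n ih =>
    have := h ((p : ℝ) ^ (n : ℤ))
    rw [ih, div_inv_eq_mul, ← zpow_add_one₀ p_ne] at this
    rw [this, zpow_add_one₀ p_ne, mul_comm ((p : ℝ) ^ _), ENNReal.ofReal_mul p_pos.le]
  | pred n ih =>
    have := h ((p : ℝ) ^ (-(n : ℤ) - 1))
    rw [div_inv_eq_mul, ← zpow_add_one₀ p_ne, sub_add_cancel, ih] at this
    have h2 : (p : ℝ) ^ (-(n : ℤ)) = p * (p : ℝ) ^ (-(n : ℤ) - 1) := by
      rw [mul_comm, ← zpow_add_one₀ p_ne, sub_add_cancel]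
    rw [h2, ENNReal.ofReal_mul p_pos.le] at this
    refine ((ENNReal.mul_right_inj ?_ ENNReal.ofReal_ne_top).1 this).symm
    simpa using hpp.out.ne_zero

theorem lint_mul (a : ℚ_[p]) (ha : a ≠ 0) (f : ℚ_[p] → ℝ≥0∞) :
    ∫⁻ x, f (a * x) = ENNReal.ofReal (‖a‖⁻¹) * ∫⁻ x, f x := by
  obtain ⟨c, hc, h⟩ := vol_preim a ha
  have h1 := h 1
  have hn' : ‖a‖ = (p : ℝ) ^ (-a.valuation) := Padic.norm_eq_zpow_neg_valuation ha
  rw [vol_ball, mul_one, one_div, hn', ← _root_.zpow_neg, vol_zpow] at h1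
  rw [hc, ← h1, hn', ← _root_.zpow_neg]

/-- normalized Haar measure on the integers, viewed on `ℚ_p` -/
noncomputable def eta (p : ℕ) [Fact p.Prime] : Measure ℚ_[p] :=
  (volume : Measure ℚ_[p]).restrict (closedBall 0 1)

instance instProb (p : ℕ) [Fact p.Prime] : IsProbabilityMeasure (eta p) :=
  ⟨by rw [eta, Measure.restrict_apply_univ, vol_ball]⟩

theorem eta_eq (f : ℚ_[p] → ℝ≥0∞) :
    ∫⁻ x, f x ∂(eta p) = ∫⁻ x, (if ‖x‖ ≤ 1 then f x else 0) := by
  rw [eta, ← lintegral_indicator measurableSet_closedBall]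
  refine lintegral_congr fun x => ?_
  classical
  simp only [Set.indicator_apply, mem_closedBall, dist_zero_right]

theorem eta_congr {f g : ℚ_[p] → ℝ≥0∞} (h : ∀ x, ‖x‖ ≤ 1 → f x = g x) :
    ∫⁻ x, f x ∂(eta p) = ∫⁻ x, g x ∂(eta p) := by
  rw [eta_eq, eta_eq]; congr 1; ext x; split_ifs with hx; exacts [h x hx, rfl]

theorem norm_add_le_one_iff {x t : ℚ_[p]} (ht : ‖t‖ ≤ 1) : ‖x + t‖ ≤ 1 ↔ ‖x‖ ≤ 1 := by
  constructor
  · intro h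
    have := Padic.nonarchimedean (x + t) (-t)
    rw [add_neg_cancel_right, norm_neg] at this
    exact this.trans (max_le h ht)
  · intro h; exact (Padic.nonarchimedean x t).trans (max_le h ht)

theorem norm_add_lt_one_iff {x t : ℚ_[p]} (ht : ‖t‖ < 1) : ‖x + t‖ < 1 ↔ ‖x‖ < 1 := by
  constructor
  · intro h
    have := Padic.nonarchimedean (x + t) (-t)
    rw [add_neg_cancel_right, norm_neg] at this
    exact this.trans_lt (max_lt h ht)
  · intro h; exact (Padic.nonarchimedean x t).trans_lt (max_lt h ht)

theorem eta_add (f : ℚ_[p] → ℝ≥0∞) (t : ℚ_[p]) (ht : ‖t‖ ≤ 1) :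
    ∫⁻ x, f (x + t) ∂(eta p) = ∫⁻ x, f x ∂(eta p) := by
  rw [eta_eq, eta_eq, ← lintegral_add_right_eq_self (fun x => if ‖x‖ ≤ 1 then f x else 0) t]
  simp only [norm_add_le_one_iff ht]

theorem eta_unit (f : ℚ_[p] → ℝ≥0∞) (u : ℚ_[p]) (hu : ‖u‖ = 1) :
    ∫⁻ x, f (u * x) ∂(eta p) = ∫⁻ x, f x ∂(eta p) := by
  have hu0 : u ≠ 0 := by rintro rfl; simp at hu
  have := lint_mul u hu0 (fun x => if ‖x‖ ≤ 1 then f x else 0)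
  rw [eta_eq, eta_eq]
  simpa [hu] using this

theorem eta_aff (f : ℚ_[p] → ℝ≥0∞) (u t : ℚ_[p]) (hu : ‖u‖ = 1) (ht : ‖t‖ ≤ 1) :
    ∫⁻ x, f (t + u * x) ∂(eta p) = ∫⁻ x, f x ∂(eta p) := by
  rw [eta_unit (fun x => f (t + x)) u hu, ← eta_add f t ht]
  simp only [add_comm]

theorem eta_small (f : ℚ_[p] → ℝ≥0∞) :
    ∫⁻ x, (if ‖x‖ < 1 then f x else 0) ∂(eta p) =
      ENNReal.ofReal ((p : ℝ)⁻¹) * ∫⁻ x, f (p * x) ∂(eta p) := by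
  have h := lint_mul (p : ℚ_[p]) pq_ne (fun x => if ‖x‖ < 1 then f x else 0)
  have hn : ‖(p : ℚ_[p])‖ = (p : ℝ)⁻¹ := Padic.norm_p
  rw [eta_eq, eta_eq]
  have e1 : (fun x : ℚ_[p] => if ‖x‖ ≤ 1 then (if ‖x‖ < 1 then f x else 0) else 0) =
      fun x => if ‖x‖ < 1 then f x else 0 := by
    ext x; by_cases h1 : ‖x‖ < 1
    · simp [h1, h1.le]
    · simp [h1]
  have e2 : (fun x : ℚ_[p] => if ‖x‖ ≤ 1 then f (p * x) else 0) =
      fun x => if ‖(p : ℚ_[p]) * x‖ < 1 then f (p * x) else 0 := by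
    ext x
    have : ‖x‖ ≤ 1 ↔ ‖(p : ℚ_[p]) * x‖ < 1 := by
      rw [lt_iff_le, norm_mul, hn]
      constructor
      · intro h; exact mul_le_of_le_one_right (inv_nonneg.2 p_pos.le) h
      · intro h; exact le_of_mul_le_mul_left (by simpa using h) (inv_pos.2 (p_pos (p := p)))
    simp only [this]
  rw [e1, e2, h, hn, inv_inv, ← mul_assoc, ← ENNReal.ofReal_mul (inv_nonneg.2 p_pos.le),
    inv_mul_cancel₀ p_ne, ENNReal.ofReal_one, one_mul]

theorem eta_small_const (c : ℝ≥0∞) :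
    ∫⁻ x : ℚ_[p], (if ‖x‖ < 1 then c else 0) ∂(eta p) = ENNReal.ofReal ((p : ℝ)⁻¹) * c := by
  rw [eta_small (fun _ => c)]; simp

theorem meas_norm_lt : MeasurableSet {x : ℚ_[p] | ‖x‖ < 1} :=
  measurableSet_lt measurable_norm measurable_const

theorem meas_norm_eq : MeasurableSet {x : ℚ_[p] | ‖x‖ = 1} :=
  measurableSet_eq_fun measurable_norm measurable_const

theorem eta_split (f : ℚ_[p] → ℝ≥0∞) :
    ∫⁻ x, f x ∂(eta p) = ∫⁻ x, (if ‖x‖ = 1 then f x else 0) ∂(eta p) +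
      ∫⁻ x, (if ‖x‖ < 1 then f x else 0) ∂(eta p) := by
  have h := lintegral_add_compl (μ := eta p) f (meas_norm_lt (p := p))
  rw [← lintegral_indicator meas_norm_lt, ← lintegral_indicator meas_norm_lt.compl] at h
  rw [← h, add_comm]
  congr 1
  · apply eta_congr; intro x hx
    simp only [Set.indicator_apply, Set.mem_compl_iff, Set.mem_ofPred_eq, not_lt]
    have : 1 ≤ ‖x‖ ↔ ‖x‖ = 1 := ⟨fun h => le_antisymm hx h, fun h => h.ge⟩
    simp only [this]

theorem eta_unit_const (c : ℝ≥0∞) :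
    ∫⁻ x : ℚ_[p], (if ‖x‖ = 1 then c else 0) ∂(eta p) = ENNReal.ofReal (1 - (p : ℝ)⁻¹) * c := by
  have h : ∀ c : ℝ≥0∞, ∫⁻ x : ℚ_[p], (if ‖x‖ = 1 then c else 0) ∂(eta p) =
      eta p {x | ‖x‖ = 1} * c := by
    intro c
    rw [mul_comm, ← lintegral_indicator_const meas_norm_eq]
    congr 1
  have h1 := eta_split (p := p) (fun _ => 1)
  rw [h, eta_small_const] at h1
  simp only [lintegral_const, measure_univ, mul_one] at h1
  rw [h]; congr 1
  rw [ENNReal.ofReal_sub _ (inv_nonneg.2 p_pos.le), ENNReal.ofReal_one]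
  exact ENNReal.eq_sub_of_add_eq ENNReal.ofReal_ne_top h1.symm

end Z19

namespace Z19
open scoped ENNReal
open Metric

variable {p : ℕ} [hpp : Fact p.Prime]

theorem norm_two (hp : Odd p) : ‖(2 : ℚ_[p])‖ = 1 := by
  have h := Padic.norm_int_le_one (p := p) 2
  have h2 : ¬ ‖((2 : ℤ) : ℚ_[p])‖ < 1 := by
    rw [Padic.norm_intCast_lt_one_iff]
    intro h
    have h3 : p ∣ 2 := by exact_mod_cast h
    have := (Nat.prime_dvd_prime_iff_eq hpp.out Nat.prime_two).1 h3
    subst this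
    exact absurd hp (by decide)
  push_cast at h h2
  exact le_antisymm h (not_lt.1 h2)

theorem norm_four (hp : Odd p) : ‖(4 : ℚ_[p])‖ = 1 := by
  have : (4 : ℚ_[p]) = 2 * 2 := by norm_num
  rw [this, norm_mul, norm_two hp, mul_one]

theorem isSquare_unit_iff (hp : Odd p) (y : ℤ_[p]) (hy : ‖y‖ = 1) :
    IsSquare (y : ℚ_[p]) ↔ IsSquare (PadicInt.toZMod y) := by
  constructor
  · rintro ⟨c, hc⟩
    have h1 : ‖c‖ * ‖c‖ = 1 := by rw [← norm_mul, ← hc]; exact hy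
    have h2 : ‖c‖ ≤ 1 := by nlinarith [norm_nonneg c]
    obtain ⟨z, hz⟩ : ∃ z : ℤ_[p], (z : ℚ_[p]) = c := ⟨⟨c, h2⟩, rfl⟩
    refine ⟨PadicInt.toZMod z, ?_⟩
    rw [← map_mul]; congr 1
    apply Subtype.ext
    rw [← hz] at hc
    exact_mod_cast hc
  · rintro ⟨r, hr⟩
    obtain ⟨a, rfl⟩ := ZMod.ringHom_surjective (PadicInt.toZMod (p := p)) r
    rw [← map_mul, ← sub_eq_zero, ← map_sub] at hr
    have hk : ‖y - a * a‖ < 1 := by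
      have : y - a * a ∈ RingHom.ker (PadicInt.toZMod (p := p)) := hr
      rw [PadicInt.ker_toZMod, PadicInt.maximalIdeal_eq_span_p, Ideal.mem_span_singleton] at this
      exact (PadicInt.norm_lt_one_iff_dvd _).2 this
    have ha : ‖a‖ = 1 := by
      by_contra hne
      have hlt : ‖a‖ < 1 := lt_of_le_of_ne (PadicInt.norm_le_one a) hne
      have h3 : ‖a * a‖ < 1 := by
        rw [norm_mul]; nlinarith [norm_nonneg a]
      have := PadicInt.nonarchimedean (y - a * a) (a * a)
      rw [sub_add_cancel, hy] at this
      exact absurd (this.trans_lt (max_lt hk h3)) (lt_irrefl _)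
    obtain ⟨z, hz, -⟩ := hensels_lemma (F := (Polynomial.X ^ 2 - Polynomial.C y : Polynomial ℤ_[p]))
      (a := a) (by
        have h2 : ‖(2 : ℤ_[p])‖ = 1 := norm_two hp
        simp only [map_sub, map_pow, Polynomial.aeval_X, Polynomial.derivative_sub,
          Polynomial.derivative_X_pow, Polynomial.derivative_C, sub_zero]
        simp [norm_mul, ha, h2]
        rw [norm_sub_rev, pow_two]; exact hk)
    simp only [map_sub, map_pow, Polynomial.aeval_X] at hz
    refine ⟨(z : ℚ_[p]), ?_⟩
    have hz' : z ^ 2 = y := by simpa [sub_eq_zero] using hz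
    rw [← hz']; push_cast; ring

theorem exists_nonsq (hp : Odd p) : ∃ u : ℚ_[p], ‖u‖ = 1 ∧
    ∀ y : ℚ_[p], ‖y‖ = 1 → (IsSquare (u * y) ↔ ¬ IsSquare y) := by
  have hp2 : p ≠ 2 := by rintro rfl; exact absurd hp (by decide)
  have hrc : ringChar (ZMod p) ≠ 2 := by rwa [ZMod.ringChar_zmod_n]
  have hnz : ∀ y : ℤ_[p], ‖y‖ = 1 → PadicInt.toZMod y ≠ 0 := by
    intro y hy h0
    have : y ∈ RingHom.ker (PadicInt.toZMod (p := p)) := h0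
    rw [PadicInt.ker_toZMod, PadicInt.maximalIdeal_eq_span_p, Ideal.mem_span_singleton] at this
    have := (PadicInt.norm_lt_one_iff_dvd _).2 this
    rw [hy] at this; exact lt_irrefl _ this
  obtain ⟨r, hr⟩ := FiniteField.exists_nonsquare hrc
  obtain ⟨u, rfl⟩ := ZMod.ringHom_surjective (PadicInt.toZMod (p := p)) r
  have hu : ‖u‖ = 1 := by
    by_contra hne
    have hlt : ‖u‖ < 1 := lt_of_le_of_ne (PadicInt.norm_le_one u) hne
    rw [PadicInt.norm_lt_one_iff_dvd, ← Ideal.mem_span_singleton, 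
      ← PadicInt.maximalIdeal_eq_span_p, ← PadicInt.ker_toZMod, RingHom.mem_ker] at hlt
    rw [hlt] at hr; exact hr IsSquare.zero
  refine ⟨u, hu, fun y hy => ?_⟩
  obtain ⟨y, rfl⟩ : ∃ z : ℤ_[p], (z : ℚ_[p]) = y := ⟨⟨y, hy.le⟩, rfl⟩
  have hy' : ‖y‖ = 1 := hy
  have h1 := isSquare_unit_iff hp (u * y) (by rw [norm_mul, hu, hy', mul_one])
  push_cast at h1
  rw [h1, isSquare_unit_iff hp y hy', map_mul]
  have a1 := quadraticChar_one_iff_isSquare (F := ZMod p) (hnz y hy')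
  have a2 := quadraticChar_one_iff_isSquare (F := ZMod p) (mul_ne_zero (hnz u hu) (hnz y hy'))
  have a3 := (quadraticChar_neg_one_iff_not_isSquare (F := ZMod p)).2 hr
  rw [← a1, ← a2, map_mul, a3]
  rcases quadraticChar_dichotomy (hnz y hy') with h | h <;> rw [h] <;> decide

/-- the class `d·(ℚ_pˣ)²` -/
def Dset (d : ℚ_[p]) : Set ℚ_[p] := {x | ∃ c : ℚ_[p], c ≠ 0 ∧ x = d * c ^ 2}

theorem meas_Dset (d : ℚ_[p]) (hd : d ≠ 0) : MeasurableSet (Dset d) := by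
  have : Dset d = (⋃ n : ℕ, (fun c => d * c ^ 2) '' closedBall (0 : ℚ_[p]) n) \ {0} := by
    ext x
    simp only [Dset, Set.mem_ofPred_eq, Set.mem_sdiff, Set.mem_iUnion, Set.mem_image,
        Set.mem_singleton_iff, mem_closedBall, dist_zero_right]
    constructor
    · rintro ⟨c, hc, rfl⟩
      obtain ⟨n, hn⟩ := exists_nat_ge ‖c‖
      exact ⟨⟨n, c, hn, rfl⟩, mul_ne_zero hd (pow_ne_zero _ hc)⟩
    · rintro ⟨⟨n, c, hn, rfl⟩, h0⟩
      exact ⟨c, by rintro rfl; simp at h0, rfl⟩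
  rw [this]
  refine MeasurableSet.diff (MeasurableSet.iUnion fun n => ?_) (measurableSet_singleton _)
  exact ((isCompact_closedBall _ _).image (by fun_prop)).isClosed.measurableSet

theorem Dset_sq (d e x : ℚ_[p]) (he : e ≠ 0) : e ^ 2 * x ∈ Dset d ↔ x ∈ Dset d := by
  constructor
  · rintro ⟨c, hc, h⟩
    refine ⟨c / e, div_ne_zero hc he, ?_⟩
    field_simp; rw [mul_comm]; rw [h]
  · rintro ⟨c, hc, h⟩
    exact ⟨e * c, mul_ne_zero he hc, by rw [h]; ring⟩

theorem sq_measure (hp : Odd p) (c : ℝ≥0∞) : 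
    2 * ∫⁻ x : ℚ_[p], ((Dset (1 : ℚ_[p])).indicator (fun x => if ‖x‖ = 1 then c else 0) x) ∂(eta p)
    = ENNReal.ofReal (1 - (p : ℝ)⁻¹) * c := by
  obtain ⟨u, hu, h⟩ := exists_nonsq hp
  set g := (Dset (1 : ℚ_[p])).indicator (fun x => if ‖x‖ = 1 then c else 0) with hg
  have hgm : Measurable g := by
    refine Measurable.indicator ?_ (meas_Dset _ one_ne_zero)
    exact Measurable.ite meas_norm_eq measurable_const measurable_const
  rw [two_mul]
  nth_rewrite 2 [← eta_unit _ u hu]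
  rw [← lintegral_add_left hgm, ← eta_unit_const]
  refine lintegral_congr fun x => ?_
  have key : ∀ x : ℚ_[p], ‖x‖ = 1 → (x ∈ Dset (1 : ℚ_[p]) ↔ IsSquare x) := by
    intro x hx
    constructor
    · rintro ⟨c, -, hc⟩; exact ⟨c, by rw [hc]; ring⟩
    · rintro ⟨c, hc⟩
      refine ⟨c, ?_, by rw [hc]; ring⟩
      rintro rfl; rw [hc] at hx; simp at hx
  classical
  simp only [hg, Set.indicator_apply, norm_mul, hu, one_mul]
  by_cases hx : ‖x‖ = 1
  · have hux : ‖u * x‖ = 1 := by rw [norm_mul, hu, hx, one_mul]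
    rw [key x hx, key _ hux, h x hx]
    by_cases hs : IsSquare x <;> simp [hs, hx]
  · simp [hx]

theorem class_measure (hp : Odd p) (d : ℚ_[p]) (hd : ‖d‖ = (p : ℝ)⁻¹) (l : ℕ) (c : ℝ≥0∞) :
    ∫⁻ x : ℚ_[p], ((Dset d).indicator
      (fun x => if ‖x‖ = (p : ℝ)⁻¹ ^ (2 * l + 1) then c else 0) x) ∂(eta p)
    = ENNReal.ofReal (1 / 2 * (1 - (p : ℝ)⁻¹) * (p : ℝ)⁻¹ ^ (2 * l + 1)) * c := by
  have hq1 : (p : ℝ)⁻¹ ≤ 1 := inv_le_one_of_one_le₀ p_gt_one.le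
  have hq0 : 0 < (p : ℝ)⁻¹ := inv_pos.2 p_pos
  have hd0 : d ≠ 0 := by rintro rfl; rw [norm_zero] at hd; exact hq0.ne hd
  set a : ℚ_[p] := (p : ℚ_[p]) ^ (2 * l) * d with ha
  have ha0 : a ≠ 0 := mul_ne_zero (pow_ne_zero _ pq_ne) hd0
  have han : ‖a‖ = (p : ℝ)⁻¹ ^ (2 * l + 1) := by
    rw [ha, norm_mul, norm_pow, Padic.norm_p, hd, pow_succ]
  have h1 := sq_measure hp c
  rw [eta_eq] at h1 ⊢
  have hmul := lint_mul a ha0 (fun x => if ‖x‖ ≤ 1 then (Dset d).indicator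
      (fun x => if ‖x‖ = (p : ℝ)⁻¹ ^ (2 * l + 1) then c else 0) x else 0)
  have heq : ∫⁻ x : ℚ_[p], (if ‖x‖ ≤ 1 then (Dset (1 : ℚ_[p])).indicator
      (fun x => if ‖x‖ = 1 then c else 0) x else 0) = 
      ∫⁻ x : ℚ_[p], (if ‖a * x‖ ≤ 1 then (Dset d).indicator
      (fun x => if ‖x‖ = (p : ℝ)⁻¹ ^ (2 * l + 1) then c else 0) (a * x) else 0) := by
    refine lintegral_congr fun x => ?_
    have hD : a * x ∈ Dset d ↔ x ∈ Dset 1 := by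
      have : a * x = ((p : ℚ_[p]) ^ l) ^ 2 * (d * x) := by rw [ha]; ring
      rw [this, Dset_sq _ _ _ (pow_ne_zero _ pq_ne)]
      constructor
      · rintro ⟨c, hc, h⟩; exact ⟨c, hc, by rw [one_mul]; exact mul_left_cancel₀ hd0 h⟩
      · rintro ⟨c, hc, h⟩; exact ⟨c, hc, by rw [h, one_mul]⟩
    classical
    simp only [Set.indicator_apply, hD, norm_mul, ← han, mul_eq_left₀ (norm_ne_zero_iff.2 ha0)]
    by_cases hx : ‖x‖ = 1
    · have : ‖a‖ ≤ 1 := by rw [han]; exact pow_le_one₀ hq0.le hq1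
      simp [hx, this]
    · simp [hx]
  rw [heq, hmul] at h1
  rw [← mul_assoc] at h1
  have e2 : (2 : ℝ≥0∞) = ENNReal.ofReal 2 := by simp
  rw [e2, ← ENNReal.ofReal_mul (by norm_num)] at h1
  have e3 : ∀ X : ℝ≥0∞, X = ENNReal.ofReal (1 / 2 * ‖a‖) * (ENNReal.ofReal (2 * ‖a‖⁻¹) * X) := by
    intro X
    rw [← mul_assoc, ← ENNReal.ofReal_mul (by positivity)]
    have : 1 / 2 * ‖a‖ * (2 * ‖a‖⁻¹) = 1 := by
      have := norm_ne_zero_iff.2 ha0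
      field_simp
    rw [this]; simp
  rw [e3 (∫⁻ x : ℚ_[p], _), h1, ← mul_assoc, ← ENNReal.ofReal_mul (by positivity), han]
  congr 2; ring

end Z19

namespace Z19
open scoped ENNReal
open Metric

variable {p : ℕ} [hpp : Fact p.Prime]

theorem iter2 {F : ℚ_[p] × ℚ_[p] → ℝ≥0∞} (hF : Measurable F) :
    ∫⁻ z, F z ∂((eta p).prod (eta p)) = ∫⁻ u, ∫⁻ v, F (u, v) ∂(eta p) ∂(eta p) :=
  lintegral_prod _ hF.aemeasurable

theorem iter3 {F : ℚ_[p] × ℚ_[p] × ℚ_[p] → ℝ≥0∞} (hF : Measurable F) :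
    ∫⁻ z, F z ∂((eta p).prod ((eta p).prod (eta p))) =
      ∫⁻ w, ∫⁻ u, ∫⁻ v, F (w, u, v) ∂(eta p) ∂(eta p) ∂(eta p) := by
  rw [lintegral_prod _ hF.aemeasurable]
  refine lintegral_congr fun w => ?_
  exact iter2 (F := fun z => F (w, z)) (by fun_prop)

theorem eta_swap {F : ℚ_[p] → ℚ_[p] → ℝ≥0∞} (hF : Measurable (fun z : ℚ_[p] × ℚ_[p] => F z.1 z.2)) :
    ∫⁻ u, ∫⁻ v, F u v ∂(eta p) ∂(eta p) = ∫⁻ v, ∫⁻ u, F u v ∂(eta p) ∂(eta p) :=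
  lintegral_lintegral_swap hF.aemeasurable

/-- content of a triple -/
noncomputable def mx (w u v : ℚ_[p]) : ℝ := max (max ‖u‖ ‖w‖) ‖v‖

theorem mx_lt {w u v : ℚ_[p]} {r : ℝ} : mx w u v < r ↔ ‖w‖ < r ∧ ‖u‖ < r ∧ ‖v‖ < r := by
  simp only [mx, max_lt_iff]; tauto

theorem mx_le {w u v : ℚ_[p]} {r : ℝ} : mx w u v ≤ r ↔ ‖w‖ ≤ r ∧ ‖u‖ ≤ r ∧ ‖v‖ ≤ r := by
  simp only [mx, max_le_iff]; tauto

theorem mx_mul (a w u v : ℚ_[p]) : mx (a * w) (a * u) (a * v) = ‖a‖ * mx w u v := by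
  simp only [mx, norm_mul, mul_max_of_nonneg _ _ (norm_nonneg a)]

@[fun_prop]
theorem meas_mx : Measurable (fun z : ℚ_[p] × ℚ_[p] × ℚ_[p] => mx z.1 z.2.1 z.2.2) := by
  unfold mx; fun_prop

theorem eta3_congr {F G : ℚ_[p] → ℚ_[p] → ℚ_[p] → ℝ≥0∞}
    (h : ∀ w u v, ‖w‖ ≤ 1 → ‖u‖ ≤ 1 → ‖v‖ ≤ 1 → F w u v = G w u v) :
    ∫⁻ w, ∫⁻ u, ∫⁻ v, F w u v ∂(eta p) ∂(eta p) ∂(eta p) =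
      ∫⁻ w, ∫⁻ u, ∫⁻ v, G w u v ∂(eta p) ∂(eta p) ∂(eta p) :=
  eta_congr fun w hw => eta_congr fun u hu => eta_congr fun v hv => h w u v hw hu hv

theorem lint_ite {α : Type*} [MeasurableSpace α] (μ : Measure α) (P : Prop) [Decidable P]
    (f : α → ℝ≥0∞) :
    ∫⁻ x, (if P then f x else 0) ∂μ = if P then ∫⁻ x, f x ∂μ else 0 := by
  split_ifs <;> simp

theorem lint_cmul {α : Type*} [MeasurableSpace α] (μ : Measure α) (r : ℝ) (f : α → ℝ≥0∞) :
    ∫⁻ x, ENNReal.ofReal r * f x ∂μ = ENNReal.ofReal r * ∫⁻ x, f x ∂μ :=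
  lintegral_const_mul' _ _ ENNReal.ofReal_ne_top

theorem eta3_small (F : ℚ_[p] → ℚ_[p] → ℚ_[p] → ℝ≥0∞) :
    ∫⁻ w, ∫⁻ u, ∫⁻ v, (if mx w u v < 1 then F w u v else 0) ∂(eta p) ∂(eta p) ∂(eta p) =
    ENNReal.ofReal ((p : ℝ)⁻¹ ^ 3) *
      ∫⁻ w, ∫⁻ u, ∫⁻ v, F (p * w) (p * u) (p * v) ∂(eta p) ∂(eta p) ∂(eta p) := by
  simp only [mx_lt, ite_and, lint_ite, eta_small, lint_cmul]
  rw [← mul_assoc, ← mul_assoc, ← ENNReal.ofReal_mul (by positivity),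
    ← ENNReal.ofReal_mul (by positivity)]
  congr 2; ring

theorem mx_pow_iff (c : ℕ) (w u v : ℚ_[p]) :
    mx ((p : ℚ_[p]) * w) (p * u) (p * v) = (p : ℝ)⁻¹ ^ (c + 1) ↔ mx w u v = (p : ℝ)⁻¹ ^ c := by
  rw [mx_mul, Padic.norm_p, pow_succ']
  exact mul_right_inj' (inv_ne_zero p_ne)

theorem eta3_level (c : ℕ) (F : ℚ_[p] → ℚ_[p] → ℚ_[p] → ℝ≥0∞) :
    ∫⁻ w, ∫⁻ u, ∫⁻ v, (if mx w u v = (p : ℝ)⁻¹ ^ c then F w u v else 0)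
      ∂(eta p) ∂(eta p) ∂(eta p) =
    ENNReal.ofReal ((p : ℝ)⁻¹ ^ (3 * c)) *
      ∫⁻ w, ∫⁻ u, ∫⁻ v, (if mx w u v = 1 then F (p ^ c * w) (p ^ c * u) (p ^ c * v) else 0)
        ∂(eta p) ∂(eta p) ∂(eta p) := by
  induction c generalizing F with
  | zero => simp
  | succ c ih =>
    have hlt : (p : ℝ)⁻¹ ^ (c + 1) < 1 :=
      pow_lt_one₀ (inv_nonneg.2 p_pos.le) (inv_lt_one_of_one_lt₀ p_gt_one) (by simp)
    have h1 := eta3_small (p := p) (fun w u v => if mx w u v = (p : ℝ)⁻¹ ^ (c + 1) then F w u v else 0)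
    have e : ∀ w u v : ℚ_[p], (if mx w u v < 1 then
        (if mx w u v = (p : ℝ)⁻¹ ^ (c + 1) then F w u v else 0) else 0) =
        if mx w u v = (p : ℝ)⁻¹ ^ (c + 1) then F w u v else 0 := by
      intro w u v
      by_cases h : mx w u v = (p : ℝ)⁻¹ ^ (c + 1)
      · rw [if_pos h, if_pos (by rw [h]; exact hlt)]
      · rw [if_neg h, ite_self]
    simp only [e, mx_pow_iff] at h1
    rw [h1, ih (fun w u v => F (p * w) (p * u) (p * v)), ← mul_assoc,
      ← ENNReal.ofReal_mul (by positivity)]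
    congr 2
    · ring
    · simp only [← mul_assoc, pow_succ']

theorem mx_cases {w u v : ℚ_[p]} (h : mx w u v ≠ 0) (h1 : mx w u v ≤ 1) :
    ∃ c : ℕ, mx w u v = (p : ℝ)⁻¹ ^ c := by
  have key : ∀ x : ℚ_[p], ‖x‖ ≠ 0 → ‖x‖ ≤ 1 → ∃ c : ℕ, ‖x‖ = (p : ℝ)⁻¹ ^ c := by
    intro x hx hx1
    have h0 : x ≠ 0 := norm_ne_zero_iff.1 hx
    refine ⟨x.valuation.toNat, ?_⟩
    have := Padic.norm_eq_zpow_neg_valuation h0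
    have hv : 0 ≤ x.valuation := (Padic.norm_le_one_iff_val_nonneg x).1 hx1
    rw [this, inv_pow, ← zpow_natCast, Int.toNat_of_nonneg hv, _root_.zpow_neg]
  unfold mx at h h1 ⊢
  rcases max_choice (max ‖u‖ ‖w‖) ‖v‖ with h2 | h2 <;> rw [h2] at h h1 ⊢
  · rcases max_choice ‖u‖ ‖w‖ with h3 | h3 <;> rw [h3] at h h1 ⊢ <;> exact key _ h h1
  · exact key _ h h1

theorem inv_pow_inj {a b : ℕ} (h : (p : ℝ)⁻¹ ^ a = (p : ℝ)⁻¹ ^ b) : a = b := by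
  rw [inv_pow, inv_pow, _root_.inv_inj] at h
  exact pow_right_injective₀ p_pos (p_gt_one.ne') h

theorem eta3_content (F : ℚ_[p] → ℚ_[p] → ℚ_[p] → ℝ≥0∞)
    (hF : Measurable (fun z : ℚ_[p] × ℚ_[p] × ℚ_[p] => F z.1 z.2.1 z.2.2)) (h0 : F 0 0 0 = 0) :
    ∫⁻ w, ∫⁻ u, ∫⁻ v, F w u v ∂(eta p) ∂(eta p) ∂(eta p) =
    ∑' c : ℕ, ENNReal.ofReal ((p : ℝ)⁻¹ ^ (3 * c)) *
      ∫⁻ w, ∫⁻ u, ∫⁻ v, (if mx w u v = 1 then F (p ^ c * w) (p ^ c * u) (p ^ c * v) else 0)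
        ∂(eta p) ∂(eta p) ∂(eta p) := by
  simp only [← eta3_level]
  have hm : ∀ c : ℕ, Measurable (fun z : ℚ_[p] × ℚ_[p] × ℚ_[p] =>
      if mx z.1 z.2.1 z.2.2 = (p : ℝ)⁻¹ ^ c then F z.1 z.2.1 z.2.2 else 0) := fun c =>
    Measurable.ite (measurableSet_eq_fun meas_mx measurable_const) hF measurable_const
  have h1 : ∀ c : ℕ, ∫⁻ w, ∫⁻ u, ∫⁻ v, (if mx w u v = (p : ℝ)⁻¹ ^ c then F w u v else 0)
      ∂(eta p) ∂(eta p) ∂(eta p) = _ := fun c => (iter3 (hm c)).symm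
  simp only [h1]
  rw [← lintegral_tsum (fun c => (hm c).aemeasurable), iter3 (Measurable.tsum hm)]
  apply eta3_congr
  intro w u v hw hu hv
  by_cases h : mx w u v = 0
  · have : w = 0 ∧ u = 0 ∧ v = 0 := by
      have := mx_le.1 h.le
      simpa using this
    obtain ⟨rfl, rfl, rfl⟩ := this
    simp [h0]
  · obtain ⟨c, hc⟩ := mx_cases h (mx_le.2 ⟨hw, hu, hv⟩)
    rw [tsum_eq_single c]
    · simp [hc]
    · intro b hb
      rw [if_neg]
      rw [hc]; intro h'; exact hb (inv_pow_inj h').symm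

theorem eta3_prim (hp : Odd p) (h : ℚ_[p] → ℝ≥0∞) (hm : Measurable h)
    (hz : ∀ x, ‖x‖ = 1 → h x = 0) :
    ∫⁻ w, ∫⁻ u, ∫⁻ v, (if mx w u v = 1 then h (w ^ 2 + 4 * u * v) else 0)
        ∂(eta p) ∂(eta p) ∂(eta p) = ENNReal.ofReal (1 - (p : ℝ)⁻¹ ^ 2) * ∫⁻ x, h x ∂(eta p) := by
  have h4 := norm_four hp
  have hq0 : 0 ≤ (p : ℝ)⁻¹ := inv_nonneg.2 p_pos.le
  have hq1 : (p : ℝ)⁻¹ ≤ 1 := inv_le_one_of_one_le₀ p_gt_one.le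
  have hsplit : ∫⁻ w, ∫⁻ u, ∫⁻ v, (if mx w u v = 1 then h (w ^ 2 + 4 * u * v) else 0)
        ∂(eta p) ∂(eta p) ∂(eta p) = ∫⁻ w, ∫⁻ u, ∫⁻ v, 
        ((if ‖u‖ = 1 then h (w ^ 2 + 4 * u * v) else 0) +
        (if ‖w‖ < 1 then (if ‖v‖ = 1 then h (w ^ 2 + 4 * u * v) else 0) else 0))
        ∂(eta p) ∂(eta p) ∂(eta p) := by
    apply eta3_congr
    intro w u v hw hu hv
    have hPle : ‖w ^ 2 + 4 * u * v‖ ≤ 1 := by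
      refine (Padic.nonarchimedean _ _).trans (max_le ?_ ?_)
      · rw [norm_pow]; exact pow_le_one₀ (norm_nonneg _) hw
      · rw [norm_mul, norm_mul, h4, one_mul]; exact mul_le_one₀ hu (norm_nonneg _) hv
    by_cases hP1 : ‖w ^ 2 + 4 * u * v‖ = 1
    · simp [hz _ hP1]
    have hPlt : ‖w ^ 2 + 4 * u * v‖ < 1 := lt_of_le_of_ne hPle hP1
    have hiff : ‖w‖ < 1 ↔ ‖u‖ * ‖v‖ < 1 := by
      have e1 : ‖w‖ < 1 ↔ ‖w ^ 2‖ < 1 := by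
        rw [norm_pow]; exact (pow_lt_one_iff_of_nonneg (norm_nonneg _) two_ne_zero).symm
      have e2 : ‖u‖ * ‖v‖ = ‖-(4 * u * v)‖ := by
        rw [norm_neg, norm_mul, norm_mul, h4, one_mul]
      rw [e1, e2, ← norm_add_lt_one_iff (x := -(4 * u * v)) hPlt]
      rw [show -(4 * u * v) + (w ^ 2 + 4 * u * v) = w ^ 2 by ring]
    have hlt1 : ∀ x : ℚ_[p], ‖x‖ ≤ 1 → (‖x‖ < 1 ↔ ¬ ‖x‖ = 1) := fun x hx =>
      ⟨fun h => h.ne, fun h => lt_of_le_of_ne hx h⟩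
    have hmx : mx w u v = 1 ↔ ¬ (mx w u v < 1) :=
      ⟨fun h => by rw [h]; exact lt_irrefl _,
       fun h => le_antisymm (mx_le.2 ⟨hw, hu, hv⟩) (not_lt.1 h)⟩
    rw [mx_lt, hlt1 w hw, hlt1 u hu, hlt1 v hv] at hmx
    by_cases hu1 : ‖u‖ = 1
    · rw [hu1, one_mul, hlt1 w hw, hlt1 v hv] at hiff
      by_cases hw1 : ‖w‖ = 1
      · have hv1 : ‖v‖ = 1 := by tauto
        have hm1 : mx w u v = 1 := by tauto
        simp [hm1, hu1, hw1]
      · have hv1 : ¬ ‖v‖ = 1 := by tauto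
        have hm1 : mx w u v = 1 := by tauto
        simp [hm1, hu1, hv1]
    · have hwlt : ‖w‖ < 1 := by
        rw [hiff]
        have := (hlt1 u hu).2 hu1
        nlinarith [norm_nonneg u, norm_nonneg v]
      have hw1 := hwlt.ne
      by_cases hv1 : ‖v‖ = 1
      · have hm1 : mx w u v = 1 := by tauto
        simp [hm1, hu1, hwlt, hv1]
      · have hm1 : ¬ mx w u v = 1 := by tauto
        simp [hm1, hu1, hv1]
  rw [hsplit]
  have m1 : Measurable (fun z : ℚ_[p] × ℚ_[p] × ℚ_[p] =>
      if ‖z.2.1‖ = 1 then h (z.1 ^ 2 + 4 * z.2.1 * z.2.2) else 0) :=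
    Measurable.ite (measurableSet_eq_fun (by fun_prop) measurable_const)
      (hm.comp (by fun_prop)) measurable_const
  have m2' : Measurable (fun z : ℚ_[p] × ℚ_[p] × ℚ_[p] =>
      (if ‖z.2.2‖ = 1 then h (z.1 ^ 2 + 4 * z.2.1 * z.2.2) else 0)) :=
    Measurable.ite (measurableSet_eq_fun (by fun_prop) measurable_const)
      (hm.comp (by fun_prop)) measurable_const
  have m2 : Measurable (fun z : ℚ_[p] × ℚ_[p] × ℚ_[p] =>
      if ‖z.1‖ < 1 then (if ‖z.2.2‖ = 1 then h (z.1 ^ 2 + 4 * z.2.1 * z.2.2) else 0) else 0) :=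
    Measurable.ite (measurableSet_lt (by fun_prop) measurable_const) m2' measurable_const
  rw [← iter3 (F := fun z => (if ‖z.2.1‖ = 1 then h (z.1 ^ 2 + 4 * z.2.1 * z.2.2) else 0) +
        (if ‖z.1‖ < 1 then (if ‖z.2.2‖ = 1 then h (z.1 ^ 2 + 4 * z.2.1 * z.2.2) else 0) else 0))
        (m1.add m2), lintegral_add_left m1, iter3 m1, iter3 m2]
  set E := ∫⁻ x, h x ∂(eta p) with hE
  have inner : ∀ w u : ℚ_[p], ‖w‖ ≤ 1 → ‖u‖ = 1 →
      ∫⁻ v, h (w ^ 2 + 4 * u * v) ∂(eta p) = E := by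
    intro w u hw hu
    exact eta_aff h (4 * u) (w ^ 2) (by rw [norm_mul, h4, hu, one_mul])
      (by rw [norm_pow]; exact pow_le_one₀ (norm_nonneg _) hw)
  have P1 : ∫⁻ w : ℚ_[p], ∫⁻ u : ℚ_[p], ∫⁻ v : ℚ_[p], (if ‖u‖ = 1 then h (w ^ 2 + 4 * u * v) else 0)
      ∂(eta p) ∂(eta p) ∂(eta p) = ENNReal.ofReal (1 - (p : ℝ)⁻¹) * E := by
    simp only [lint_ite]
    have : ∀ w : ℚ_[p], ‖w‖ ≤ 1 → 
        ∫⁻ u : ℚ_[p], (if ‖u‖ = 1 then ∫⁻ v, h (w ^ 2 + 4 * u * v) ∂(eta p) else 0) ∂(eta p) = 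
        ENNReal.ofReal (1 - (p : ℝ)⁻¹) * E := by
      intro w hw
      rw [← eta_unit_const]
      refine lintegral_congr fun u => ?_
      split_ifs with hu
      · exact inner w u hw hu
      · rfl
    rw [eta_congr this]; simp
  have P2 : ∫⁻ w : ℚ_[p], ∫⁻ u : ℚ_[p], ∫⁻ v : ℚ_[p], (if ‖w‖ < 1 then
      (if ‖v‖ = 1 then h (w ^ 2 + 4 * u * v) else 0) else 0)
      ∂(eta p) ∂(eta p) ∂(eta p) =
      ENNReal.ofReal ((p : ℝ)⁻¹) * (ENNReal.ofReal (1 - (p : ℝ)⁻¹) * E) := by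
    simp only [lint_ite]
    rw [← eta_small_const]
    apply eta_congr
    intro w hw
    congr 1
    rw [eta_swap (F := fun u v => if ‖v‖ = 1 then h (w ^ 2 + 4 * u * v) else 0)
      (m2'.comp (f := fun z : ℚ_[p] × ℚ_[p] => ((w, z) : ℚ_[p] × ℚ_[p] × ℚ_[p])) (by fun_prop))]
    simp only [lint_ite]
    rw [← eta_unit_const]
    refine lintegral_congr fun v => ?_
    split_ifs with hv
    · rw [← inner w v hw hv]
      refine lintegral_congr fun u => ?_
      congr 1; ring
    · rfl
  simp only at P1 P2 ⊢
  rw [P1, P2, ← mul_assoc, ← add_mul, ← ENNReal.ofReal_mul hq0,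
    ← ENNReal.ofReal_add (by linarith) (mul_nonneg hq0 (by linarith))]
  congr 2; ring

end Z19

namespace Z19
open scoped ENNReal
open Metric

variable {p : ℕ} [hpp : Fact p.Prime]

/-- level from the ratio `m²/|P|` -/
noncomputable def Lv (p : ℕ) (r : ℝ) : ℕ := ⌊Real.logb p (r / p) / 2⌋₊

theorem Lv_eval (l : ℕ) : Lv p ((p : ℝ) * (p : ℝ) ^ (2 * l)) = l := by
  unfold Lv
  rw [mul_div_cancel_left₀ _ p_ne, Real.logb_pow, Real.logb_self_eq_one p_gt_one]
  push_cast
  rw [show (2 * (l : ℝ) * 1 / 2) = l by ring, Nat.floor_natCast]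

@[fun_prop]
theorem meas_Lv : Measurable (Lv p) := by
  unfold Lv Real.logb
  fun_prop

/-- the integrand as a function of `P, m₁, m₂` -/
noncomputable def H (w : ℕ → ℕ → ℝ≥0∞) (s : ℝ) (d : ℚ_[p]) (P : ℚ_[p]) (m1 m2 : ℝ) : ℝ≥0∞ :=
  (Dset d).indicator (fun P => w (Lv p (m1 ^ 2 / ‖P‖)) (Lv p (m2 ^ 2 / ‖P‖)) *
    ENNReal.ofReal (‖P‖ ^ (s - 2))) P

theorem meas_H (w : ℕ → ℕ → ℝ≥0∞) (s : ℝ) (d : ℚ_[p]) (hd : d ≠ 0) :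
    Measurable (fun z : ℚ_[p] × ℝ × ℝ => H w s d z.1 z.2.1 z.2.2) := by
  classical
  unfold H
  simp only [Set.indicator_apply]
  refine Measurable.ite (measurable_fst (meas_Dset d hd)) ?_ measurable_const
  refine Measurable.mul ?_ (by fun_prop)
  have : Measurable (fun n : ℕ × ℕ => w n.1 n.2) := measurable_of_countable _
  exact this.comp (f := fun z : ℚ_[p] × ℝ × ℝ => (Lv p (z.2.1 ^ 2 / ‖z.1‖), Lv p (z.2.2 ^ 2 / ‖z.1‖)))
    (by fun_prop)

theorem meas_H' {α : Type*} [MeasurableSpace α] (w : ℕ → ℕ → ℝ≥0∞) (s : ℝ) (d : ℚ_[p]) (hd : d ≠ 0)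
    {f : α → ℚ_[p]} {g h : α → ℝ} (hf : Measurable f) (hg : Measurable g) (hh : Measurable h) :
    Measurable (fun z => H w s d (f z) (g z) (h z)) :=
  (meas_H w s d hd).comp (f := fun z => (f z, g z, h z)) (by fun_prop)

theorem Dset_norm (d : ℚ_[p]) (hd : ‖d‖ = (p : ℝ)⁻¹) {P : ℚ_[p]} (h : P ∈ Dset d) :
    ∃ n : ℤ, ‖P‖ = (p : ℝ)⁻¹ * (p : ℝ) ^ (2 * n) := by
  obtain ⟨c, hc, rfl⟩ := h
  refine ⟨-c.valuation, ?_⟩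
  rw [norm_mul, norm_pow, hd, Padic.norm_eq_zpow_neg_valuation hc, ← zpow_natCast, ← _root_.zpow_mul]
  congr 2; push_cast; ring

theorem Dset_norm_nat (d : ℚ_[p]) (hd : ‖d‖ = (p : ℝ)⁻¹) {P : ℚ_[p]} (h : P ∈ Dset d)
    (h1 : ‖P‖ ≤ 1) : ∃ l : ℕ, ‖P‖ = (p : ℝ)⁻¹ ^ (2 * l + 1) := by
  obtain ⟨n, hn⟩ := Dset_norm d hd h
  have e : ‖P‖ = (p : ℝ) ^ (2 * n - 1) := by
    rw [hn, zpow_sub₀ p_ne, zpow_one]; field_simp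
  rw [e] at h1
  have h2 : 2 * n - 1 ≤ 0 := by
    by_contra h3
    exact absurd h1 (not_le.2 (one_lt_zpow₀ p_gt_one (by omega)))
  refine ⟨(-n).toNat, ?_⟩
  rw [e, inv_pow, ← zpow_natCast, ← _root_.zpow_neg]
  congr 1; push_cast
  rw [Int.toNat_of_nonneg (by omega)]; ring

theorem Dset_lt (d : ℚ_[p]) (hd : ‖d‖ = (p : ℝ)⁻¹) {P : ℚ_[p]} (h : P ∈ Dset d)
    (h1 : ‖P‖ ≤ 1) : ‖P‖ < 1 := by
  obtain ⟨l, hl⟩ := Dset_norm_nat d hd h h1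
  rw [hl]
  exact pow_lt_one₀ (inv_nonneg.2 p_pos.le) (inv_lt_one_of_one_lt₀ p_gt_one) (by simp)

theorem zero_not_Dset (d : ℚ_[p]) (hd : ‖d‖ = (p : ℝ)⁻¹) : (0 : ℚ_[p]) ∉ Dset d := by
  intro h
  obtain ⟨n, hn⟩ := Dset_norm d hd h
  rw [norm_zero] at hn
  have : (0 : ℝ) < (p : ℝ)⁻¹ * (p : ℝ) ^ (2 * n) :=
    mul_pos (inv_pos.2 p_pos) (zpow_pos p_pos _)
  linarith

theorem H_not (w : ℕ → ℕ → ℝ≥0∞) (s : ℝ) (d : ℚ_[p]) {P : ℚ_[p]} (h : P ∉ Dset d) (m1 m2 : ℝ) :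
    H w s d P m1 m2 = 0 := Set.indicator_of_notMem h _

theorem H_mem (w : ℕ → ℕ → ℝ≥0∞) (s : ℝ) (d : ℚ_[p]) {P : ℚ_[p]} (h : P ∈ Dset d) (m1 m2 : ℝ) :
    H w s d P m1 m2 = w (Lv p (m1 ^ 2 / ‖P‖)) (Lv p (m2 ^ 2 / ‖P‖)) *
    ENNReal.ofReal (‖P‖ ^ (s - 2)) := Set.indicator_of_mem h _

theorem H_symm (w : ℕ → ℕ → ℝ≥0∞) (hw : ∀ a b, w a b = w b a) (s : ℝ) (d P : ℚ_[p]) (m1 m2 : ℝ) :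
    H w s d P m1 m2 = H w s d P m2 m1 := by
  unfold H; simp only [hw (Lv p (m1 ^ 2 / _))]

theorem H_scale (w : ℕ → ℕ → ℝ≥0∞) (s : ℝ) (d e P : ℚ_[p]) (he : e ≠ 0) (m1 m2 : ℝ) :
    H w s d (e ^ 2 * P) (‖e‖ * m1) (‖e‖ * m2) =
      ENNReal.ofReal (‖e‖ ^ (2 * (s - 2))) * H w s d P m1 m2 := by
  have he' : ‖e‖ ≠ 0 := norm_ne_zero_iff.2 he
  by_cases h : P ∈ Dset d
  · rw [H_mem w s d h, H_mem w s d ((Dset_sq d e P he).2 h)]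
    have r : ∀ m : ℝ, (‖e‖ * m) ^ 2 / ‖e ^ 2 * P‖ = m ^ 2 / ‖P‖ := by
      intro m
      rw [norm_mul, norm_pow, mul_pow, mul_div_mul_left _ _ (pow_ne_zero 2 he')]
    rw [r, r, norm_mul, norm_pow, Real.mul_rpow (by positivity) (norm_nonneg _),
      ENNReal.ofReal_mul (by positivity), Real.rpow_mul (norm_nonneg _), Real.rpow_two]
    ring
  · rw [H_not w s d h, H_not w s d (fun h' => h ((Dset_sq d e P he).1 h')), mul_zero]

/-- coefficient terms -/
noncomputable def TT (w : ℕ → ℕ → ℝ≥0∞) (s : ℝ) (p : ℕ) (c : ℕ) : ℝ≥0∞ :=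
  ENNReal.ofReal ((p : ℝ)⁻¹ ^ (3 * c)) * (ENNReal.ofReal (1 - (p : ℝ)⁻¹ ^ 2) *
    ∑' l : ℕ, ENNReal.ofReal (1 / 2 * (1 - (p : ℝ)⁻¹) * (p : ℝ)⁻¹ ^ (2 * l + 1)) *
      (w (c + l) l * ENNReal.ofReal (((p : ℝ)⁻¹ ^ (2 * c + 2 * l + 1)) ^ (s - 2))))

theorem h_int (hp : Odd p) (w : ℕ → ℕ → ℝ≥0∞) (s : ℝ) (d : ℚ_[p]) (hd : ‖d‖ = (p : ℝ)⁻¹) (c : ℕ) :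
    ∫⁻ x, H w s d (((p : ℚ_[p]) ^ c) ^ 2 * x) 1 ((p : ℝ)⁻¹ ^ c) ∂(eta p) =
    ∑' l : ℕ, ENNReal.ofReal (1 / 2 * (1 - (p : ℝ)⁻¹) * (p : ℝ)⁻¹ ^ (2 * l + 1)) *
      (w (c + l) l * ENNReal.ofReal (((p : ℝ)⁻¹ ^ (2 * c + 2 * l + 1)) ^ (s - 2))) := by
  classical
  have hd0 : d ≠ 0 := by
    intro h; rw [h, norm_zero] at hd; exact (inv_ne_zero p_ne) hd.symm
  simp only [← class_measure hp d hd]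
  rw [← lintegral_tsum]
  · apply eta_congr
    intro x hx
    by_cases h : x ∈ Dset d
    · simp only [Set.indicator_of_mem h]
      obtain ⟨l, hl⟩ := Dset_norm_nat d hd h hx
      have hpc : (p : ℚ_[p]) ^ c ≠ 0 := pow_ne_zero _ pq_ne
      rw [H_mem w s d ((Dset_sq d _ x hpc).2 h), tsum_eq_single l]
      · rw [if_pos hl]
        have hn : ‖((p : ℚ_[p]) ^ c) ^ 2 * x‖ = (p : ℝ)⁻¹ ^ (2 * c + 2 * l + 1) := by
          rw [norm_mul, hl, norm_pow, norm_pow, Padic.norm_p, ← pow_mul, ← pow_add]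
          congr 1; ring
        rw [hn]
        have e1 : (1 : ℝ) ^ 2 / (p : ℝ)⁻¹ ^ (2 * c + 2 * l + 1) = p * (p : ℝ) ^ (2 * (c + l)) := by
          rw [inv_pow]; field_simp; ring
        have e2 : ((p : ℝ)⁻¹ ^ c) ^ 2 / (p : ℝ)⁻¹ ^ (2 * c + 2 * l + 1) = p * (p : ℝ) ^ (2 * l) := by
          have := p_ne (p := p)
          rw [← pow_mul, div_eq_iff (pow_ne_zero _ (inv_ne_zero this)), pow_add, pow_add, pow_one,
            mul_comm c 2]
          have h1 : (p : ℝ) * (p : ℝ)⁻¹ = 1 := mul_inv_cancel₀ this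
          have h2 : (p : ℝ) ^ (2 * l) * (p : ℝ)⁻¹ ^ (2 * l) = 1 := by rw [← mul_pow, h1, one_pow]
          linear_combination (- (p : ℝ)⁻¹ ^ (2 * c)) * h1 - ((p : ℝ)⁻¹ ^ (2 * c) * ((p : ℝ) * (p : ℝ)⁻¹)) * h2
        rw [e1, e2, Lv_eval, Lv_eval]
      · intro b hb
        rw [if_neg]
        rw [hl]; intro h'
        have := inv_pow_inj h'
        omega
    · rw [H_not w s d (fun h' => h ((Dset_sq d _ x (pow_ne_zero _ pq_ne)).1 h'))]
      simp [Set.indicator_of_notMem h]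
  · intro l
    refine (Measurable.indicator ?_ (meas_Dset d hd0)).aemeasurable
    exact Measurable.ite (measurableSet_eq_fun (by fun_prop) measurable_const)
      measurable_const measurable_const

set_option maxHeartbeats 1000000 in
theorem TT_eq (hp : Odd p) (w : ℕ → ℕ → ℝ≥0∞) (s : ℝ) (d : ℚ_[p]) (hd : ‖d‖ = (p : ℝ)⁻¹) (c : ℕ) :
    ENNReal.ofReal ((p : ℝ)⁻¹ ^ (3 * c)) *
      ∫⁻ x, ∫⁻ u, ∫⁻ v, (if mx x u v = 1 then
        H w s d ((p ^ c * x) ^ 2 + 4 * (p ^ c * u) * (p ^ c * v)) 1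
          (mx ((p : ℚ_[p]) ^ c * x) ((p : ℚ_[p]) ^ c * u) ((p : ℚ_[p]) ^ c * v)) else 0)
        ∂(eta p) ∂(eta p) ∂(eta p) = TT w s p c := by
  have hd0 : d ≠ 0 := by
    intro h; rw [h, norm_zero] at hd; exact (inv_ne_zero p_ne) hd.symm
  unfold TT
  rw [← h_int hp w s d hd, ← eta3_prim hp (fun x => H w s d (((p : ℚ_[p]) ^ c) ^ 2 * x) 1 ((p : ℝ)⁻¹ ^ c))]
  · congr 1
    refine lintegral_congr fun x => lintegral_congr fun u => lintegral_congr fun v => ?_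
    split_ifs with h
    · rw [mx_mul, h, norm_pow, Padic.norm_p, mul_one,
        show ((p : ℚ_[p]) ^ c * x) ^ 2 + 4 * (p ^ c * u) * (p ^ c * v) =
          ((p : ℚ_[p]) ^ c) ^ 2 * (x ^ 2 + 4 * u * v) by ring]
    · rfl
  · exact meas_H' w s d hd0 (by fun_prop) measurable_const measurable_const
  · intro x hx
    apply H_not
    intro h
    exact (Dset_lt d hd ((Dset_sq d _ x (pow_ne_zero _ pq_ne)).1 h) hx.le).ne hx

theorem J_eq (hp : Odd p) (w : ℕ → ℕ → ℝ≥0∞) (s : ℝ) (d : ℚ_[p]) (hd : ‖d‖ = (p : ℝ)⁻¹) :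
    ∫⁻ x, ∫⁻ u, ∫⁻ v, H w s d (x ^ 2 + 4 * u * v) 1 (mx x u v) ∂(eta p) ∂(eta p) ∂(eta p) =
    ∑' c, TT w s p c := by
  have hd0 : d ≠ 0 := by
    intro h; rw [h, norm_zero] at hd; exact (inv_ne_zero p_ne) hd.symm
  rw [eta3_content (fun x u v => H w s d (x ^ 2 + 4 * u * v) 1 (mx x u v))]
  · simp only [TT_eq hp w s d hd]
  · exact meas_H' w s d hd0 (by fun_prop) measurable_const (by fun_prop)
  · apply H_not; simpa using zero_not_Dset d hd

theorem Jlt_eq (hp : Odd p) (w : ℕ → ℕ → ℝ≥0∞) (s : ℝ) (d : ℚ_[p]) (hd : ‖d‖ = (p : ℝ)⁻¹) :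
    ∫⁻ x, ∫⁻ u, ∫⁻ v, (if mx x u v < 1 then H w s d (x ^ 2 + 4 * u * v) 1 (mx x u v) else 0)
      ∂(eta p) ∂(eta p) ∂(eta p) = ∑' c, TT w s p (c + 1) := by
  have hd0 : d ≠ 0 := by
    intro h; rw [h, norm_zero] at hd; exact (inv_ne_zero p_ne) hd.symm
  rw [eta3_content (fun x u v => if mx x u v < 1 then H w s d (x ^ 2 + 4 * u * v) 1 (mx x u v) else 0)]
  · rw [tsum_eq_zero_add' ENNReal.summable]
    have z : ∀ x u v : ℚ_[p], (if mx x u v = 1 then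
        if mx ((p : ℚ_[p]) ^ 0 * x) ((p : ℚ_[p]) ^ 0 * u) ((p : ℚ_[p]) ^ 0 * v) < 1 then
        H w s d ((p ^ 0 * x) ^ 2 + 4 * (p ^ 0 * u) * (p ^ 0 * v)) 1
          (mx ((p : ℚ_[p]) ^ 0 * x) ((p : ℚ_[p]) ^ 0 * u) ((p : ℚ_[p]) ^ 0 * v)) else 0 else 0) = 0 := by
      intro x u v
      split_ifs with h1 h2
      · simp [h1] at h2
      · rfl
      · rfl
    simp only [z]
    simp only [lintegral_zero, mul_zero, zero_add]
    congr 1; ext c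
    rw [← TT_eq hp w s d hd]
    congr 1
    refine lintegral_congr fun x => lintegral_congr fun u => lintegral_congr fun v => ?_
    split_ifs with h h2
    · rfl
    · exfalso; apply h2
      rw [mx_mul, h, norm_pow, Padic.norm_p, mul_one]
      exact pow_lt_one₀ (inv_nonneg.2 p_pos.le) (inv_lt_one_of_one_lt₀ p_gt_one) (by simp)
    · rfl
  · exact Measurable.ite (measurableSet_lt (by fun_prop) measurable_const) 
      (meas_H' w s d hd0 (by fun_prop) measurable_const (by fun_prop)) measurable_const
  · split_ifs
    · apply H_not; simpa using zero_not_Dset d hd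
    · rfl

end Z19

namespace Z19
open scoped ENNReal
open Metric

variable {p : ℕ} [hpp : Fact p.Prime]

/-- one-dimensional zeta integral -/
noncomputable def EE (p : ℕ) [Fact p.Prime] (σ : ℝ) : ℝ≥0∞ :=
  ∫⁻ x : ℚ_[p], ENNReal.ofReal (‖x‖ ^ σ) ∂(eta p)

/-- zeta integral of the determinant -/
noncomputable def ZZ (p : ℕ) [Fact p.Prime] (σ : ℝ) : ℝ≥0∞ :=
  ∫⁻ a : ℚ_[p], ∫⁻ b : ℚ_[p], ∫⁻ c : ℚ_[p], ∫⁻ d : ℚ_[p],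
    ENNReal.ofReal (‖a * d - b * c‖ ^ σ) ∂(eta p) ∂(eta p) ∂(eta p) ∂(eta p)

theorem ofReal_p_mul (σ : ℝ) (x : ℚ_[p]) :
    ENNReal.ofReal (‖(p : ℚ_[p]) * x‖ ^ σ) =
      ENNReal.ofReal ((p : ℝ)⁻¹ ^ σ) * ENNReal.ofReal (‖x‖ ^ σ) := by
  rw [norm_mul, Padic.norm_p, Real.mul_rpow (inv_nonneg.2 p_pos.le) (norm_nonneg _),
    ENNReal.ofReal_mul (Real.rpow_nonneg (inv_nonneg.2 p_pos.le) _)]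

theorem EE_rec (σ : ℝ) : EE p σ = ENNReal.ofReal (1 - (p : ℝ)⁻¹) +
    ENNReal.ofReal ((p : ℝ)⁻¹) * (ENNReal.ofReal ((p : ℝ)⁻¹ ^ σ) * EE p σ) := by
  conv_lhs => unfold EE
  rw [eta_split, eta_small]
  congr 1
  · rw [← mul_one (ENNReal.ofReal (1 - (p : ℝ)⁻¹)), ← eta_unit_const]
    refine lintegral_congr fun x => ?_
    split_ifs with h
    · simp [h]
    · rfl
  · congr 1
    simp only [ofReal_p_mul, lint_cmul]
    rfl

theorem ofReal_le_one (σ : ℝ) (hσ : 0 ≤ σ) (x : ℚ_[p]) (hx : ‖x‖ ≤ 1) :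
    ENNReal.ofReal (‖x‖ ^ σ) ≤ 1 := by
  rw [ENNReal.ofReal_le_one]
  exact Real.rpow_le_one (norm_nonneg _) hx hσ

theorem eta_le_one {f : ℚ_[p] → ℝ≥0∞} (h : ∀ x, ‖x‖ ≤ 1 → f x ≤ 1) : ∫⁻ x, f x ∂(eta p) ≤ 1 := by
  have : ∫⁻ x, f x ∂(eta p) ≤ ∫⁻ x : ℚ_[p], 1 ∂(eta p) := by
    rw [eta_eq, eta_eq]
    apply lintegral_mono
    intro x
    simp only
    split_ifs with hx
    · exact h x hx
    · exact le_rfl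
  simpa using this

theorem norm_det_le {a b c d : ℚ_[p]} (ha : ‖a‖ ≤ 1) (hb : ‖b‖ ≤ 1) (hc : ‖c‖ ≤ 1) (hd : ‖d‖ ≤ 1) :
    ‖a * d - b * c‖ ≤ 1 := by
  rw [sub_eq_add_neg]
  refine (Padic.nonarchimedean _ _).trans (max_le ?_ ?_)
  · rw [norm_mul]; exact mul_le_one₀ ha (norm_nonneg _) hd
  · rw [norm_neg, norm_mul]; exact mul_le_one₀ hb (norm_nonneg _) hc

theorem EE_le (σ : ℝ) (hσ : 0 ≤ σ) : EE p σ ≤ 1 := eta_le_one (ofReal_le_one σ hσ)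

theorem ZZ_le (σ : ℝ) (hσ : 0 ≤ σ) : ZZ p σ ≤ 1 :=
  eta_le_one fun _ ha => eta_le_one fun _ hb => eta_le_one fun _ hc => eta_le_one fun _ hd =>
    ofReal_le_one σ hσ _ (norm_det_le ha hb hc hd)

theorem eta_const (c : ℝ≥0∞) : ∫⁻ _ : ℚ_[p], c ∂(eta p) = c := by simp

theorem ZZ_rec (σ : ℝ) : ZZ p σ = ENNReal.ofReal (1 - (p : ℝ)⁻¹) * EE p σ +
    ENNReal.ofReal ((p : ℝ)⁻¹) * (ENNReal.ofReal (1 - (p : ℝ)⁻¹) * EE p σ +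
      ENNReal.ofReal ((p : ℝ)⁻¹) * (ENNReal.ofReal ((p : ℝ)⁻¹ ^ σ) * ZZ p σ)) := by
  have inner : ∀ u t : ℚ_[p], ‖u‖ = 1 → ‖t‖ ≤ 1 →
      ∫⁻ x, ENNReal.ofReal (‖t + u * x‖ ^ σ) ∂(eta p) = EE p σ := fun u t hu ht =>
    eta_aff (fun x => ENNReal.ofReal (‖x‖ ^ σ)) u t hu ht
  conv_lhs => unfold ZZ
  rw [eta_split, eta_small]
  congr 1
  · rw [← eta_unit_const]
    apply eta_congr
    intro a ha
    split_ifs with h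
    · rw [← eta_const (p := p) (EE p σ)]
      apply eta_congr; intro b hb
      rw [← eta_const (p := p) (EE p σ)]
      apply eta_congr; intro c hc
      rw [← inner a (-(b * c)) h (by rw [norm_neg, norm_mul]; exact mul_le_one₀ hb (norm_nonneg _) hc)]
      refine lintegral_congr fun d => ?_
      congr 3; ring
    · rfl
  · congr 1
    have key : ∀ a : ℚ_[p], ‖a‖ ≤ 1 → ∫⁻ b : ℚ_[p], ∫⁻ c : ℚ_[p], ∫⁻ d : ℚ_[p],
        ENNReal.ofReal (‖p * a * d - b * c‖ ^ σ) ∂(eta p) ∂(eta p) ∂(eta p) =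
        ENNReal.ofReal (1 - (p : ℝ)⁻¹) * EE p σ + ENNReal.ofReal ((p : ℝ)⁻¹) *
        (ENNReal.ofReal ((p : ℝ)⁻¹ ^ σ) * ∫⁻ b : ℚ_[p], ∫⁻ c : ℚ_[p], ∫⁻ d : ℚ_[p],
        ENNReal.ofReal (‖a * d - b * c‖ ^ σ) ∂(eta p) ∂(eta p) ∂(eta p)) := by
      intro a ha
      rw [eta_split, eta_small]
      congr 1
      · rw [← eta_unit_const]
        apply eta_congr
        intro b hb
        split_ifs with h
        · rw [eta_swap (by fun_prop)]
          rw [← eta_const (p := p) (EE p σ)]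
          apply eta_congr; intro d hd
          rw [← inner (-b) (p * a * d) (by rw [norm_neg, h]) ?_]
          · refine lintegral_congr fun d => ?_
            congr 3; ring
          · rw [norm_mul, norm_mul, Padic.norm_p]
            exact mul_le_one₀ (mul_le_one₀ (inv_le_one_of_one_le₀ p_gt_one.le) (norm_nonneg _) ha)
              (norm_nonneg _) hd
        · rfl
      · congr 1
        simp only [← lint_cmul, ← ofReal_p_mul]
        refine lintegral_congr fun b => lintegral_congr fun c => lintegral_congr fun d => ?_
        congr 3; ring
    rw [eta_congr key, lintegral_add_left measurable_const, eta_const, lint_cmul, lint_cmul]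
    rfl

theorem ZZ_val (σ : ℝ) (hσ : 0 < σ) : ZZ p σ = ENNReal.ofReal ((1 - (p : ℝ)⁻¹) * (1 - (p : ℝ)⁻¹ ^ 2) /
    ((1 - (p : ℝ)⁻¹ * (p : ℝ)⁻¹ ^ σ) * (1 - (p : ℝ)⁻¹ ^ 2 * (p : ℝ)⁻¹ ^ σ))) := by
  have hE : EE p σ ≠ ∞ := ne_top_of_le_ne_top ENNReal.one_ne_top (EE_le σ hσ.le)
  have hZ : ZZ p σ ≠ ∞ := ne_top_of_le_ne_top ENNReal.one_ne_top (ZZ_le σ hσ.le)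
  have h1 := EE_rec (p := p) σ
  have h2 := ZZ_rec (p := p) σ
  lift EE p σ to NNReal using hE with e he
  lift ZZ p σ to NNReal using hZ with z hz
  have hq0 : 0 < (p : ℝ)⁻¹ := inv_pos.2 p_pos
  have hq1 : (p : ℝ)⁻¹ < 1 := inv_lt_one_of_one_lt₀ p_gt_one
  have hr0 : 0 < (p : ℝ)⁻¹ ^ σ := Real.rpow_pos_of_pos hq0 _
  have hr1 : (p : ℝ)⁻¹ ^ σ < 1 := Real.rpow_lt_one hq0.le hq1 hσ
  generalize (p : ℝ)⁻¹ ^ σ = r at *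
  generalize (p : ℝ)⁻¹ = q at *
  have e1 : (e : ℝ) = (1 - q) + q * (r * e) := by
    have := congrArg ENNReal.toReal h1
    simpa [ENNReal.toReal_add, ENNReal.mul_eq_top, ENNReal.toReal_mul, hq0.le, hq1.le, hr0.le] using this
  have e2 : (z : ℝ) = (1 - q) * e + q * ((1 - q) * e + q * (r * z)) := by
    have := congrArg ENNReal.toReal h2
    simpa [ENNReal.toReal_add, ENNReal.mul_eq_top, ENNReal.toReal_mul, hq0.le, hq1.le, hr0.le] using this
  rw [← ENNReal.ofReal_coe_nnreal]
  congr 1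
  have k1 : 0 < 1 - q * r := by nlinarith
  have k2 : 0 < 1 - q ^ 2 * r := by nlinarith
  rw [eq_div_iff (by positivity)]
  have f1 : (e : ℝ) * (1 - q * r) = 1 - q := by linarith
  have f2 : (z : ℝ) * (1 - q ^ 2 * r) = (1 - q ^ 2) * e := by linear_combination e2
  linear_combination (1 - q * r) * f2 + (1 - q ^ 2) * f1

end Z19

namespace Z19
open scoped ENNReal
open Metric

variable {p : ℕ} [hpp : Fact p.Prime]

instance instBorelM (p : ℕ) [Fact p.Prime] : BorelSpace (Matrix (Fin 2) (Fin 2) ℚ_[p]) :=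
  inferInstanceAs (BorelSpace (Fin 2 → Fin 2 → ℚ_[p]))
instance instLCM (p : ℕ) [Fact p.Prime] : LocallyCompactSpace (Matrix (Fin 2) (Fin 2) ℚ_[p]) :=
  inferInstanceAs (LocallyCompactSpace (Fin 2 → Fin 2 → ℚ_[p]))
instance instSCM (p : ℕ) [Fact p.Prime] : SecondCountableTopology (Matrix (Fin 2) (Fin 2) ℚ_[p]) :=
  inferInstanceAs (SecondCountableTopology (Fin 2 → Fin 2 → ℚ_[p]))

/-- the integral lattice -/
def LL (p : ℕ) [Fact p.Prime] : Set (VV p) :=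
  {v : VV p | (∀ i j, ‖v.1 i j‖ ≤ 1) ∧ (∀ i j, ‖v.2 i j‖ ≤ 1)}

theorem haar_unique (μ ν : Measure (VV p)) [μ.IsAddHaarMeasure] [ν.IsAddHaarMeasure]
    (hμ : μ (LL p) = 1) (hν : ν (LL p) = 1) : μ = ν := by
  have h := Measure.isAddLeftInvariant_eq_smul μ ν
  have h2 := congrArg (fun m => m (LL p)) h
  simp only [Measure.smul_apply, hμ, hν] at h2
  have h3 : μ.addHaarScalarFactor ν = 1 := by
    have : ((μ.addHaarScalarFactor ν : NNReal) : ℝ≥0∞) = 1 := by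
      rw [h2]; simp [ENNReal.smul_def]
    exact_mod_cast this
  rw [h, h3, one_smul]

/-- row-type coordinates -/
abbrev K8 (p : ℕ) [Fact p.Prime] :=
  ℚ_[p] × ℚ_[p] × ℚ_[p] × ℚ_[p] × ℚ_[p] × ℚ_[p] × ℚ_[p] × ℚ_[p]

/-- pair of matrices from eight coordinates -/
def mkV (a b c d r2 r4 r1 r3 : ℚ_[p]) : VV p := (!![a, b; r1, r2], !![c, d; r3, r4])

/-- coordinates as an additive equivalence -/
def toV (p : ℕ) [Fact p.Prime] : K8 p ≃+ VV p where
  toFun z := mkV z.1 z.2.1 z.2.2.1 z.2.2.2.1 z.2.2.2.2.1 z.2.2.2.2.2.1 z.2.2.2.2.2.2.1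
    z.2.2.2.2.2.2.2
  invFun v := (v.1 0 0, v.1 0 1, v.2 0 0, v.2 0 1, v.1 1 1, v.2 1 1, v.1 1 0, v.2 1 0)
  left_inv z := by simp [mkV]
  right_inv v := by
    refine Prod.ext ?_ ?_
    · ext i j; fin_cases i <;> fin_cases j <;> simp [mkV]
    · ext i j; fin_cases i <;> fin_cases j <;> simp [mkV]
  map_add' z z' := by
    refine Prod.ext ?_ ?_
    · ext i j; fin_cases i <;> fin_cases j <;> simp [mkV]
    · ext i j; fin_cases i <;> fin_cases j <;> simp [mkV]

theorem toV_cont : Continuous (toV p) := by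
  refine Continuous.prodMk ?_ ?_
  · refine continuous_matrix fun i j => ?_
    fin_cases i <;> fin_cases j <;> simp [toV, mkV] <;> fun_prop
  · refine continuous_matrix fun i j => ?_
    fin_cases i <;> fin_cases j <;> simp [toV, mkV] <;> fun_prop

theorem entry_cont1 (i j : Fin 2) : Continuous (fun v : VV p => v.1 i j) :=
  (continuous_fst).matrix_elem i j

theorem entry_cont2 (i j : Fin 2) : Continuous (fun v : VV p => v.2 i j) :=
  (continuous_snd).matrix_elem i j

theorem toV_symm_cont : Continuous (toV p).symm := by
  change Continuous (fun v : VV p =>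
    (v.1 0 0, v.1 0 1, v.2 0 0, v.2 0 1, v.1 1 1, v.2 1 1, v.1 1 0, v.2 1 0))
  have := entry_cont1 (p := p)
  have := entry_cont2 (p := p)
  fun_prop

/-- product measure -/
noncomputable def vol8 (p : ℕ) [Fact p.Prime] : Measure (K8 p) :=
  (volume : Measure ℚ_[p]).prod ((volume : Measure ℚ_[p]).prod ((volume : Measure ℚ_[p]).prod
   ((volume : Measure ℚ_[p]).prod ((volume : Measure ℚ_[p]).prod ((volume : Measure ℚ_[p]).prod
   ((volume : Measure ℚ_[p]).prod (volume : Measure ℚ_[p])))))))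

theorem prodHaar (p : ℕ) [Fact p.Prime] {G : Type*} [AddGroup G] [TopologicalSpace G]
    [MeasurableSpace G] [MeasurableAdd G] (ν : Measure G) [SFinite ν] [h : ν.IsAddHaarMeasure] :
    ((volume : Measure ℚ_[p]).prod ν).IsAddHaarMeasure := Measure.prod.instIsAddHaarMeasure _ _

set_option synthInstance.maxHeartbeats 2000000 in
set_option synthInstance.maxSize 4000 in
instance instHaar8 (p : ℕ) [Fact p.Prime] : (vol8 p).IsAddHaarMeasure := by
  unfold vol8
  iterate 7 refine @prodHaar p _ _ _ _ _ _ _ _ ?_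
  infer_instance

theorem vol8_cube : (vol8 p) (toV p ⁻¹' LL p) = 1 := by
  have : toV p ⁻¹' LL p = closedBall (0 : ℚ_[p]) 1 ×ˢ closedBall (0 : ℚ_[p]) 1 ×ˢ
    closedBall (0 : ℚ_[p]) 1 ×ˢ closedBall (0 : ℚ_[p]) 1 ×ˢ closedBall (0 : ℚ_[p]) 1 ×ˢ
    closedBall (0 : ℚ_[p]) 1 ×ˢ closedBall (0 : ℚ_[p]) 1 ×ˢ closedBall (0 : ℚ_[p]) 1 := by
    ext z
    simp [LL, toV, mkV, Fin.forall_fin_two]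
    tauto
  rw [this, vol8]
  simp only [Measure.prod_prod, vol_ball, mul_one]

theorem meas_LL : MeasurableSet (LL p) := by
  have e : LL p = (⋂ i, ⋂ j, {v | ‖v.1 i j‖ ≤ 1}) ∩ (⋂ i, ⋂ j, {v | ‖v.2 i j‖ ≤ 1}) := by
    ext v; simp [LL]
  rw [e]
  refine MeasurableSet.inter ?_ ?_
  · exact MeasurableSet.iInter fun i => MeasurableSet.iInter fun j =>
      measurableSet_le (entry_cont1 i j).measurable.norm measurable_const
  · exact MeasurableSet.iInter fun i => MeasurableSet.iInter fun j =>
      measurableSet_le (entry_cont2 i j).measurable.norm measurable_const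

theorem mu_eq (μ : Measure (VV p)) [μ.IsAddHaarMeasure] (hμ : μ (LL p) = 1) :
    μ = (vol8 p).map (toV p) := by
  have := AddEquiv.isAddHaarMeasure_map (vol8 p) (toV p) toV_cont toV_symm_cont
  have hL := meas_LL (p := p)
  apply haar_unique _ _ hμ
  rw [Measure.map_apply toV_cont.measurable hL, vol8_cube]


/-- symmetry: an additive automorphism preserving the lattice preserves the measure -/
theorem mu_map (μ : Measure (VV p)) [μ.IsAddHaarMeasure] (hμ : μ (LL p) = 1) (e : VV p ≃+ VV p)
    (he : Continuous e) (he' : Continuous e.symm) (hL : e ⁻¹' LL p = LL p) : μ.map e = μ := by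
  have := AddEquiv.isAddHaarMeasure_map μ e he he'
  apply haar_unique _ _ _ hμ
  rw [Measure.map_apply he.measurable meas_LL, hL, hμ]

theorem lint_symm (μ : Measure (VV p)) [μ.IsAddHaarMeasure] (hμ : μ (LL p) = 1) (e : VV p ≃+ VV p)
    (he : Continuous e) (he' : Continuous e.symm) (hL : e ⁻¹' LL p = LL p) (Φ : VV p → ℝ≥0∞)
    (hΦ : Measurable Φ) : ∫⁻ v, Φ (e v) ∂μ = ∫⁻ v, Φ v ∂μ := by
  conv_rhs => rw [← mu_map μ hμ e he he' hL]
  rw [lintegral_map hΦ he.measurable]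

/-- transposition of both matrices -/
def tau (p : ℕ) [Fact p.Prime] : VV p ≃+ VV p where
  toFun v := (v.1ᵀ, v.2ᵀ)
  invFun v := (v.1ᵀ, v.2ᵀ)
  left_inv v := by simp
  right_inv v := by simp
  map_add' v w := by simp

/-- exchange of the rows -/
def rho (p : ℕ) [Fact p.Prime] : VV p ≃+ VV p where
  toFun v := (v.1.submatrix Fin.rev id, v.2.submatrix Fin.rev id)
  invFun v := (v.1.submatrix Fin.rev id, v.2.submatrix Fin.rev id)
  left_inv v := by refine Prod.ext ?_ ?_ <;> ext i j <;> simp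
  right_inv v := by refine Prod.ext ?_ ?_ <;> ext i j <;> simp
  map_add' v w := by refine Prod.ext ?_ ?_ <;> ext i j <;> simp

theorem tau_cont : Continuous (tau p) := by
  refine Continuous.prodMk ?_ ?_
  · exact continuous_matrix fun i j => entry_cont1 j i
  · exact continuous_matrix fun i j => entry_cont2 j i

theorem rho_cont : Continuous (rho p) := by
  refine Continuous.prodMk ?_ ?_
  · exact continuous_matrix fun i j => entry_cont1 (Fin.rev i) j
  · exact continuous_matrix fun i j => entry_cont2 (Fin.rev i) j

theorem tau_LL : tau p ⁻¹' LL p = LL p := by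
  ext v
  simp [LL, tau, Fin.forall_fin_two]
  tauto

theorem rho_LL : rho p ⁻¹' LL p = LL p := by
  ext v
  simp [LL, rho, Fin.forall_fin_two]
  tauto

theorem lint_tau (μ : Measure (VV p)) [μ.IsAddHaarMeasure] (hμ : μ (LL p) = 1) (Φ : VV p → ℝ≥0∞)
    (hΦ : Measurable Φ) : ∫⁻ v, Φ (tau p v) ∂μ = ∫⁻ v, Φ v ∂μ :=
  lint_symm μ hμ (tau p) tau_cont tau_cont tau_LL Φ hΦ

theorem lint_rho (μ : Measure (VV p)) [μ.IsAddHaarMeasure] (hμ : μ (LL p) = 1) (Φ : VV p → ℝ≥0∞)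
    (hΦ : Measurable Φ) : ∫⁻ v, Φ (rho p v) ∂μ = ∫⁻ v, Φ v ∂μ :=
  lint_symm μ hμ (rho p) rho_cont rho_cont rho_LL Φ hΦ

end Z19

namespace Z19
open scoped ENNReal
open Metric

variable {p : ℕ} [hpp : Fact p.Prime]

theorem lint_aff (a t : ℚ_[p]) (ha : a ≠ 0) (f : ℚ_[p] → ℝ≥0∞) :
    ∫⁻ x, f (a * x + t) = ENNReal.ofReal (‖a‖⁻¹) * ∫⁻ x, f x := by
  rw [lint_mul a ha (fun x => f (x + t)), lintegral_add_right_eq_self f t]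

theorem vol_swap {g : ℚ_[p] → ℚ_[p] → ℝ≥0∞} (hg : Measurable (fun z : ℚ_[p] × ℚ_[p] => g z.1 z.2)) :
    ∫⁻ u, ∫⁻ v, g u v = ∫⁻ v, ∫⁻ u, g u v := lintegral_lintegral_swap hg.aemeasurable

theorem sub2_aux (a b c d : ℚ_[p]) (hD : a * d - b * c ≠ 0) (ha : a ≠ 0) (g : ℚ_[p] → ℚ_[p] → ℝ≥0∞)
    (hg : Measurable (fun z : ℚ_[p] × ℚ_[p] => g z.1 z.2)) :
    ∫⁻ n, ∫⁻ m, g (a * n + b * m) (c * n + d * m) =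
      ENNReal.ofReal (‖a * d - b * c‖⁻¹) * ∫⁻ x, ∫⁻ y, g x y := by
  rw [vol_swap (hg.comp (f := fun z : ℚ_[p] × ℚ_[p] => (a * z.1 + b * z.2, c * z.1 + d * z.2))
    (by fun_prop))]
  have e1 : ∀ m : ℚ_[p], ∫⁻ n, g (a * n + b * m) (c * n + d * m) =
      ENNReal.ofReal (‖a‖⁻¹) * ∫⁻ x, g x ((a * d - b * c) / a * m + c / a * x) := by
    intro m
    rw [← lint_aff a (b * m) ha]
    refine lintegral_congr fun n => ?_
    congr 1
    field_simp; ring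
  simp only [e1, lint_cmul]
  rw [vol_swap (g := fun m x => g x ((a * d - b * c) / a * m + c / a * x))
    (hg.comp (f := fun z : ℚ_[p] × ℚ_[p] => (z.2, (a * d - b * c) / a * z.1 + c / a * z.2))
    (by fun_prop))]
  have e2 : ∀ x : ℚ_[p], ∫⁻ m, g x ((a * d - b * c) / a * m + c / a * x) =
      ENNReal.ofReal (‖(a * d - b * c) / a‖⁻¹) * ∫⁻ y, g x y := fun x =>
    lint_aff _ _ (div_ne_zero hD ha) (g x)
  simp only [e2, lint_cmul]
  rw [← mul_assoc, ← ENNReal.ofReal_mul (by positivity)]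
  congr 2
  rw [norm_div]
  have := norm_ne_zero_iff.2 ha
  have := norm_ne_zero_iff.2 hD
  field_simp

theorem sub2 (a b c d : ℚ_[p]) (hD : a * d - b * c ≠ 0) (g : ℚ_[p] → ℚ_[p] → ℝ≥0∞)
    (hg : Measurable (fun z : ℚ_[p] × ℚ_[p] => g z.1 z.2)) :
    ∫⁻ x, ∫⁻ y, g x y =
      ENNReal.ofReal ‖a * d - b * c‖ * ∫⁻ n, ∫⁻ m, g (a * n + b * m) (c * n + d * m) := by
  have key : ∫⁻ n, ∫⁻ m, g (a * n + b * m) (c * n + d * m) =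
      ENNReal.ofReal (‖a * d - b * c‖⁻¹) * ∫⁻ x, ∫⁻ y, g x y := by
    by_cases ha : a = 0
    · have hc : c ≠ 0 := by
        rintro rfl; apply hD; rw [ha]; ring
      have hD' : c * b - d * a ≠ 0 := by
        intro h; apply hD; linear_combination -h
      rw [sub2_aux c d a b hD' hc (fun y x => g x y)
        (hg.comp (f := fun z : ℚ_[p] × ℚ_[p] => (z.2, z.1)) (by fun_prop)),
        vol_swap hg, show c * b - d * a = -(a * d - b * c) by ring, norm_neg]
    · exact sub2_aux a b c d hD ha g hg
  rw [key, ← mul_assoc, ← ENNReal.ofReal_mul (norm_nonneg _),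
    mul_inv_cancel₀ (norm_ne_zero_iff.2 hD), ENNReal.ofReal_one, one_mul]

theorem lint_pr {G : Type*} [MeasurableSpace G] (ν : Measure G) [SFinite ν] (F : ℚ_[p] × G → ℝ≥0∞)
    (hF : Measurable F) : ∫⁻ z, F z ∂((volume : Measure ℚ_[p]).prod ν) = ∫⁻ a, ∫⁻ z, F (a, z) ∂ν :=
  lintegral_prod _ hF.aemeasurable

theorem meas_slice {G : Type*} [MeasurableSpace G] {F : ℚ_[p] × G → ℝ≥0∞}
    (hF : Measurable F) (a : ℚ_[p]) : Measurable (fun z => F (a, z)) := hF.comp measurable_prodMk_left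

theorem lint_toV (μ : Measure (VV p)) [μ.IsAddHaarMeasure] (hμ : μ (LL p) = 1)
    (Φ : VV p → ℝ≥0∞) (hΦ : Measurable Φ) :
    ∫⁻ v, Φ v ∂μ = ∫⁻ a, ∫⁻ b, ∫⁻ c, ∫⁻ d, ∫⁻ r2, ∫⁻ r4, ∫⁻ r1, ∫⁻ r3,
      Φ (mkV a b c d r2 r4 r1 r3) := by
  rw [mu_eq μ hμ, lintegral_map hΦ toV_cont.measurable]
  have h : Measurable (fun z => Φ (toV p z)) := hΦ.comp toV_cont.measurable
  unfold vol8
  rw [lint_pr _ _ h]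
  refine lintegral_congr fun a => ?_
  have h := meas_slice h a
  rw [lint_pr _ _ h]
  refine lintegral_congr fun b => ?_
  have h := meas_slice h b
  rw [lint_pr _ _ h]
  refine lintegral_congr fun c => ?_
  have h := meas_slice h c
  rw [lint_pr _ _ h]
  refine lintegral_congr fun d => ?_
  have h := meas_slice h d
  rw [lint_pr _ _ h]
  refine lintegral_congr fun r2 => ?_
  have h := meas_slice h r2
  rw [lint_pr _ _ h]
  refine lintegral_congr fun r4 => ?_
  have h := meas_slice h r4
  rw [lint_pr _ _ h]
  rfl

theorem meas_mkV {G : Type*} [MeasurableSpace G] {a b c d r2 r4 r1 r3 : G → ℚ_[p]}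
    (ha : Measurable a) (hb : Measurable b) (hc : Measurable c) (hd : Measurable d)
    (h2 : Measurable r2) (h4 : Measurable r4) (h1 : Measurable r1) (h3 : Measurable r3) :
    Measurable (fun z => mkV (a z) (b z) (c z) (d z) (r2 z) (r4 z) (r1 z) (r3 z)) :=
  (toV_cont (p := p)).measurable.comp (f := fun z => (a z, b z, c z, d z, r2 z, r4 z, r1 z, r3 z))
    (by fun_prop)

theorem chart (μ : Measure (VV p)) [μ.IsAddHaarMeasure] (hμ : μ (LL p) = 1)
    (Φ : VV p → ℝ≥0∞) (hΦ : Measurable Φ)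
    (h0 : ∀ a b c d r2 r4 r1 r3, a * d - b * c = 0 → Φ (mkV a b c d r2 r4 r1 r3) = 0) :
    ∫⁻ v, Φ v ∂μ = ∫⁻ a, ∫⁻ b, ∫⁻ c, ∫⁻ d, ∫⁻ n2, ∫⁻ n4, ∫⁻ n1, ∫⁻ n3,
      ENNReal.ofReal (‖a * d - b * c‖ ^ 2) * Φ (mkV a b c d (a * n2 + b * n4) (c * n2 + d * n4)
        (a * n1 + b * n3) (c * n1 + d * n3)) := by
  rw [lint_toV μ hμ Φ hΦ]
  refine lintegral_congr fun a => lintegral_congr fun b => lintegral_congr fun c =>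
    lintegral_congr fun d => ?_
  by_cases hD : a * d - b * c = 0
  · simp [hD, h0 _ _ _ _ _ _ _ _ hD]
  · have hm : Measurable (fun z : (ℚ_[p] × ℚ_[p]) × (ℚ_[p] × ℚ_[p]) =>
        Φ (mkV a b c d z.1.1 z.1.2 z.2.1 z.2.2)) :=
      hΦ.comp (meas_mkV (by fun_prop) (by fun_prop) (by fun_prop) (by fun_prop)
        (by fun_prop) (by fun_prop) (by fun_prop) (by fun_prop))
    have hm1 : ∀ r2 r4 : ℚ_[p], Measurable (fun z : ℚ_[p] × ℚ_[p] =>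
        Φ (mkV a b c d r2 r4 z.1 z.2)) := fun r2 r4 =>
      hΦ.comp (meas_mkV (by fun_prop) (by fun_prop) (by fun_prop) (by fun_prop)
        (by fun_prop) (by fun_prop) (by fun_prop) (by fun_prop))
    have hm2 : Measurable (fun z : ℚ_[p] × ℚ_[p] => ∫⁻ r1, ∫⁻ r3,
        Φ (mkV a b c d z.1 z.2 r1 r3)) := by
      have e : (fun z : ℚ_[p] × ℚ_[p] => ∫⁻ r1, ∫⁻ r3, Φ (mkV a b c d z.1 z.2 r1 r3)) =
        fun z => ∫⁻ x, Φ (mkV a b c d z.1 z.2 x.1 x.2)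
          ∂((volume : Measure ℚ_[p]).prod (volume : Measure ℚ_[p])) := by
        ext z
        rw [lint_pr _ _ (hm1 z.1 z.2)]
      rw [e]
      exact hm.lintegral_prod_right'
    rw [sub2 a b c d hD _ hm2]
    simp only [sub2 a b c d hD (fun r1 r3 => Φ (mkV a b c d _ _ r1 r3)) (hm1 _ _), lint_cmul]
    rw [← mul_assoc, ← ENNReal.ofReal_mul (norm_nonneg _), ← sq]

end Z19

namespace Z19
open scoped ENNReal
open Metric

variable {p : ℕ} [hpp : Fact p.Prime]

theorem meas_lint {α : Type*} [MeasurableSpace α] {f : α → ℚ_[p] → ℝ≥0∞}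
    (hf : Measurable (fun z : α × ℚ_[p] => f z.1 z.2)) : Measurable (fun a => ∫⁻ x, f a x ∂(eta p)) :=
  hf.lintegral_prod_right'

theorem J4 (hp : Odd p) (χ : ℚ_[p] → ℝ≥0∞) (hχ : Measurable χ) (κ : ℝ)
    (hκ : ∫⁻ x, χ x ∂(eta p) = ENNReal.ofReal κ) (G : ℚ_[p] → ℚ_[p] → ℚ_[p] → ℝ≥0∞)
    (hG : Measurable (fun z : ℚ_[p] × ℚ_[p] × ℚ_[p] => G z.1 z.2.1 z.2.2)) :
    ∫⁻ n2, ∫⁻ n4, ∫⁻ n1, ∫⁻ n3, χ (n1 + n4) * G (n1 - n4) n3 n2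
      ∂(eta p) ∂(eta p) ∂(eta p) ∂(eta p) =
    ENNReal.ofReal κ * ∫⁻ w, ∫⁻ u, ∫⁻ v, G w u v ∂(eta p) ∂(eta p) ∂(eta p) := by
  have mG : ∀ {α : Type} [MeasurableSpace α] {f g h : α → ℚ_[p]}, Measurable f → Measurable g →
      Measurable h → Measurable (fun z => G (f z) (g z) (h z)) := by
    intro α _ f g h hf hg hh
    exact hG.comp (f := fun z => (f z, g z, h z)) (by fun_prop)
  have mχ : ∀ {α : Type} [MeasurableSpace α] {f : α → ℚ_[p]}, Measurable f →
      Measurable (fun z => χ (f z)) := fun hf => hχ.comp hf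
  have step1 : ∀ n2 n4 : ℚ_[p], ‖n4‖ ≤ 1 → ∫⁻ n1, ∫⁻ n3, χ (n1 + n4) * G (n1 - n4) n3 n2 
      ∂(eta p) ∂(eta p) = ∫⁻ n3, ∫⁻ x, χ (x + 2 * n4) * G x n3 n2 ∂(eta p) ∂(eta p) := by
    intro n2 n4 h4
    rw [eta_swap ((mχ (by fun_prop)).mul (mG (by fun_prop) (by fun_prop) (by fun_prop)))]
    refine lintegral_congr fun n3 => ?_
    rw [← eta_add (fun n1 => χ (n1 + n4) * G (n1 - n4) n3 n2) n4 h4]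
    refine lintegral_congr fun x => ?_
    rw [show x + n4 + n4 = x + 2 * n4 by ring, show x + n4 - n4 = x by ring]
  have step2 : ∀ n2 : ℚ_[p], ∫⁻ n4, ∫⁻ n1, ∫⁻ n3, χ (n1 + n4) * G (n1 - n4) n3 n2
      ∂(eta p) ∂(eta p) ∂(eta p) = ENNReal.ofReal κ * ∫⁻ n3, ∫⁻ x, G x n3 n2 ∂(eta p) ∂(eta p) := by
    intro n2
    rw [eta_congr (step1 n2), eta_swap (F := fun n4 n3 => ∫⁻ x, χ (x + 2 * n4) * G x n3 n2 ∂(eta p))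
      (meas_lint (f := fun (z : ℚ_[p] × ℚ_[p]) x => χ (x + 2 * z.1) * G x z.2 n2)
      ((mχ (by fun_prop)).mul (mG (by fun_prop) (by fun_prop) (by fun_prop)))), ← lint_cmul]
    refine lintegral_congr fun n3 => ?_
    rw [eta_swap ((mχ (by fun_prop)).mul (mG (by fun_prop) (by fun_prop) (by fun_prop))), ← lint_cmul]
    apply eta_congr
    intro x hx
    rw [lintegral_mul_const _ (mχ (by fun_prop)), eta_aff χ 2 x (norm_two hp) hx, hκ]
  simp only [step2, lint_cmul]
  congr 1
  rw [eta_swap (F := fun n2 n3 => ∫⁻ x, G x n3 n2 ∂(eta p))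
    (meas_lint (f := fun (z : ℚ_[p] × ℚ_[p]) x => G x z.2 z.1)
      (mG (by fun_prop) (by fun_prop) (by fun_prop)))]
  have : ∀ n3 : ℚ_[p], ∫⁻ n2, ∫⁻ x, G x n3 n2 ∂(eta p) ∂(eta p) =
      ∫⁻ x, ∫⁻ n2, G x n3 n2 ∂(eta p) ∂(eta p) := fun n3 =>
    eta_swap (mG (by fun_prop) (by fun_prop) (by fun_prop))
  simp only [this]
  rw [eta_swap (F := fun n3 x => ∫⁻ n2, G x n3 n2 ∂(eta p))
    (meas_lint (f := fun (z : ℚ_[p] × ℚ_[p]) n2 => G z.2 z.1 n2)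
      (mG (by fun_prop) (by fun_prop) (by fun_prop)))]

theorem mulconst4 (F : ℚ_[p] → ℚ_[p] → ℚ_[p] → ℚ_[p] → ℝ≥0∞)
    (hF : Measurable (fun z : ((ℚ_[p] × ℚ_[p]) × ℚ_[p]) × ℚ_[p] => F z.1.1.1 z.1.1.2 z.1.2 z.2))
    (J : ℝ≥0∞) :
    ∫⁻ a, ∫⁻ b, ∫⁻ c, ∫⁻ d, F a b c d * J ∂(eta p) ∂(eta p) ∂(eta p) ∂(eta p) =
    (∫⁻ a, ∫⁻ b, ∫⁻ c, ∫⁻ d, F a b c d ∂(eta p) ∂(eta p) ∂(eta p) ∂(eta p)) * J := by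
  have h1 := meas_lint (f := fun (z : (ℚ_[p] × ℚ_[p]) × ℚ_[p]) d => F z.1.1 z.1.2 z.2 d) hF
  have h2 := meas_lint (f := fun (z : ℚ_[p] × ℚ_[p]) c => ∫⁻ d, F z.1 z.2 c d ∂(eta p)) h1
  have h3 := meas_lint (f := fun (z : ℚ_[p]) b => ∫⁻ c, ∫⁻ d, F z b c d ∂(eta p) ∂(eta p)) h2
  rw [← lintegral_mul_const _ h3]
  refine lintegral_congr fun a => ?_
  have h2' : Measurable (fun b => ∫⁻ c, ∫⁻ d, F a b c d ∂(eta p) ∂(eta p)) :=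
    h2.comp (f := fun b : ℚ_[p] => (a, b)) (by fun_prop)
  rw [← lintegral_mul_const _ h2']
  refine lintegral_congr fun b => ?_
  have h1' : Measurable (fun c => ∫⁻ d, F a b c d ∂(eta p)) :=
    h1.comp (f := fun c : ℚ_[p] => ((a, b), c)) (by fun_prop)
  rw [← lintegral_mul_const _ h1']
  refine lintegral_congr fun c => ?_
  have hF' : Measurable (fun d => F a b c d) :=
    hF.comp (f := fun d : ℚ_[p] => (((a, b), c), d)) (by fun_prop)
  rw [← lintegral_mul_const _ hF']

theorem vol_to_eta {f g : ℚ_[p] → ℝ≥0∞} (h1 : ∀ x, ‖x‖ ≤ 1 → f x = g x) (h2 : ∀ x, ¬ ‖x‖ ≤ 1 → f x = 0) :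
    ∫⁻ x, f x = ∫⁻ x, g x ∂(eta p) := by
  rw [eta_eq]
  refine lintegral_congr fun x => ?_
  split_ifs with h
  · exact h1 x h
  · exact h2 x h

/-- integrand on `V` -/
noncomputable def Hv (w : ℕ → ℕ → ℝ≥0∞) (s : ℝ) (d : ℚ_[p]) (v : VV p) : ℝ≥0∞ :=
  H w s d (Pq v) (mcoord (Fmap1 v)) (mcoord (Fmap2 v))

theorem Pq_disc1 (v : VV p) : Pq v = (Fmap1 v).2.1 ^ 2 - 4 * (Fmap1 v).1 * (Fmap1 v).2.2 := by
  simp only [Pq, Fmap1, det_fin_two, adjugate_fin_two, Matrix.sub_apply, Matrix.mul_apply,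
    Fin.sum_univ_two, Matrix.of_apply, Matrix.cons_val_zero, Matrix.cons_val_one, Matrix.cons_val']
  simp
  ring

theorem Pq_disc2 (v : VV p) : Pq v = (Fmap2 v).2.1 ^ 2 - 4 * (Fmap2 v).1 * (Fmap2 v).2.2 := by
  simp only [Pq, Fmap2, det_fin_two, adjugate_fin_two, Matrix.sub_apply, Matrix.mul_apply,
    Fin.sum_univ_two, Matrix.of_apply, Matrix.cons_val_zero, Matrix.cons_val_one, Matrix.cons_val']
  simp
  ring

theorem meas_entry1 (i j : Fin 2) : Measurable (fun v : VV p => v.1 i j) := (entry_cont1 i j).measurable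
theorem meas_entry2 (i j : Fin 2) : Measurable (fun v : VV p => v.2 i j) := (entry_cont2 i j).measurable

theorem meas_F1 : Measurable (Fmap1 : VV p → _) := by
  have := meas_entry1 (p := p)
  have := meas_entry2 (p := p)
  unfold Fmap1; fun_prop

theorem meas_F2 : Measurable (Fmap2 : VV p → _) := by
  have := meas_entry1 (p := p)
  have := meas_entry2 (p := p)
  unfold Fmap2; fun_prop

theorem meas_Pq : Measurable (Pq : VV p → _) := by
  have e : (Pq : VV p → _) = fun v => (Fmap1 v).2.1 ^ 2 - 4 * (Fmap1 v).1 * (Fmap1 v).2.2 :=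
    funext Pq_disc1
  rw [e]
  have := meas_F1 (p := p)
  fun_prop

theorem meas_mcoord : Measurable (mcoord : ℚ_[p] × ℚ_[p] × ℚ_[p] → ℝ) := by
  unfold mcoord; fun_prop

theorem meas_m1 : Measurable (fun v : VV p => mcoord (Fmap1 v)) := meas_mcoord.comp meas_F1
theorem meas_m2 : Measurable (fun v : VV p => mcoord (Fmap2 v)) := meas_mcoord.comp meas_F2

theorem meas_Hv (w : ℕ → ℕ → ℝ≥0∞) (s : ℝ) (d : ℚ_[p]) (hd : d ≠ 0) : Measurable (Hv w s d) :=
  meas_H' w s d hd meas_Pq meas_m1 meas_m2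

end Z19

namespace Z19
open scoped ENNReal
open Metric

variable {p : ℕ} [hpp : Fact p.Prime]

/-- `(A, A N)` -/
noncomputable def VN (a b c d n2 n4 n1 n3 : ℚ_[p]) : VV p :=
  mkV a b c d (a * n2 + b * n4) (c * n2 + d * n4) (a * n1 + b * n3) (c * n1 + d * n3)

theorem F1_VN (a b c d n2 n4 n1 n3 : ℚ_[p]) : Fmap1 (VN a b c d n2 n4 n1 n3) =
    (a * d - b * c, (a * d - b * c) * (n1 + n4), (a * d - b * c) * (n1 * n4 - n2 * n3)) := by
  simp only [Fmap1, VN, mkV, Matrix.of_apply, Matrix.cons_val_zero, Matrix.cons_val_one,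
    Matrix.cons_val']
  simp
  constructor <;> ring

theorem F2_VN (a b c d n2 n4 n1 n3 : ℚ_[p]) : Fmap2 (VN a b c d n2 n4 n1 n3) =
    ((a * d - b * c) * n3, (a * d - b * c) * (n4 - n1), (a * d - b * c) * (- n2)) := by
  simp only [Fmap2, VN, mkV, Matrix.of_apply, Matrix.cons_val_zero, Matrix.cons_val_one,
    Matrix.cons_val']
  simp
  refine ⟨?_, ?_, ?_⟩ <;> ring

theorem P_VN (a b c d n2 n4 n1 n3 : ℚ_[p]) : Pq (VN a b c d n2 n4 n1 n3) =
    (a * d - b * c) ^ 2 * ((n1 - n4) ^ 2 + 4 * n3 * n2) := by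
  rw [Pq_disc1, F1_VN]; ring

theorem m1_VN (a b c d n2 n4 n1 n3 : ℚ_[p]) : mcoord (Fmap1 (VN a b c d n2 n4 n1 n3)) =
    ‖a * d - b * c‖ * max (max 1 ‖n1 + n4‖) ‖n1 * n4 - n2 * n3‖ := by
  rw [F1_VN]
  simp only [mcoord, norm_mul, mul_max_of_nonneg _ _ (norm_nonneg (a * d - b * c)), mul_one]

theorem m2_VN (a b c d n2 n4 n1 n3 : ℚ_[p]) : mcoord (Fmap2 (VN a b c d n2 n4 n1 n3)) =
    ‖a * d - b * c‖ * mx (n1 - n4) n3 n2 := by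
  rw [F2_VN]
  simp only [mcoord, mx, norm_mul, mul_max_of_nonneg _ _ (norm_nonneg (a * d - b * c)), norm_neg,
    norm_sub_rev n1 n4]

theorem add_le1 {x y : ℚ_[p]} (hx : ‖x‖ ≤ 1) (hy : ‖y‖ ≤ 1) : ‖x + y‖ ≤ 1 :=
  (Padic.nonarchimedean _ _).trans (max_le hx hy)

theorem mul_le1 {x y : ℚ_[p]} (hx : ‖x‖ ≤ 1) (hy : ‖y‖ ≤ 1) : ‖x * y‖ ≤ 1 := by
  rw [norm_mul]; exact mul_le_one₀ hx (norm_nonneg _) hy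

theorem sub_le1 {x y : ℚ_[p]} (hx : ‖x‖ ≤ 1) (hy : ‖y‖ ≤ 1) : ‖x - y‖ ≤ 1 := by
  rw [sub_eq_add_neg]; exact add_le1 hx (by rwa [norm_neg])

theorem VN_LL {a b c d n2 n4 n1 n3 : ℚ_[p]} : VN a b c d n2 n4 n1 n3 ∈ LL p ↔
    (‖a‖ ≤ 1 ∧ ‖b‖ ≤ 1 ∧ ‖c‖ ≤ 1 ∧ ‖d‖ ≤ 1) ∧ ‖a * n2 + b * n4‖ ≤ 1 ∧ ‖c * n2 + d * n4‖ ≤ 1 ∧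
    ‖a * n1 + b * n3‖ ≤ 1 ∧ ‖c * n1 + d * n3‖ ≤ 1 := by
  simp [LL, VN, mkV, Fin.forall_fin_two]
  tauto

theorem cond_iff (hp : Odd p) (a b c d n2 n4 n1 n3 : ℚ_[p]) (hD : a * d - b * c ≠ 0) :
    (VN a b c d n2 n4 n1 n3 ∈ LL p ∧
      mcoord (Fmap2 (VN a b c d n2 n4 n1 n3)) ≤ mcoord (Fmap1 (VN a b c d n2 n4 n1 n3)) ∧
      ‖(Fmap1 (VN a b c d n2 n4 n1 n3)).1‖ = mcoord (Fmap1 (VN a b c d n2 n4 n1 n3))) ↔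
    (‖a‖ ≤ 1 ∧ ‖b‖ ≤ 1 ∧ ‖c‖ ≤ 1 ∧ ‖d‖ ≤ 1) ∧ ‖n2‖ ≤ 1 ∧ ‖n4‖ ≤ 1 ∧ ‖n1‖ ≤ 1 ∧ ‖n3‖ ≤ 1 := by
  have hD' : 0 < ‖a * d - b * c‖ := norm_pos_iff.2 hD
  rw [VN_LL, m1_VN, m2_VN, F1_VN]
  simp only
  constructor
  · rintro ⟨⟨h1, -⟩, h2, h3⟩
    refine ⟨h1, ?_⟩
    rw [← h3] at h2
    have h4 : mx (n1 - n4) n3 n2 ≤ 1 := by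
      by_contra h; nlinarith
    have h5 : max (max 1 ‖n1 + n4‖) ‖n1 * n4 - n2 * n3‖ = 1 := by
      have := mul_left_cancel₀ hD'.ne' (h3.symm.trans (mul_one _).symm)
      exact this
    have h6 : ‖n1 + n4‖ ≤ 1 := by
      rw [← h5]; exact (le_max_right _ _).trans (le_max_left _ _)
    obtain ⟨k1, k2, k3⟩ := mx_le.1 h4
    have e1 : ‖n1‖ ≤ 1 := by
      have : ‖2 * n1‖ ≤ 1 := by
        rw [show 2 * n1 = (n1 + n4) + (n1 - n4) by ring]; exact add_le1 h6 k1
      rwa [norm_mul, norm_two hp, one_mul] at this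
    have e4 : ‖n4‖ ≤ 1 := by
      rw [show n4 = (n1 + n4) - n1 by ring]; exact sub_le1 h6 e1
    exact ⟨k3, e4, e1, k2⟩
  · rintro ⟨⟨ha, hb, hc, hd⟩, h2, h4, h1, h3⟩
    have h5 : max (max 1 ‖n1 + n4‖) ‖n1 * n4 - n2 * n3‖ = 1 := by
      rw [max_eq_left (add_le1 h1 h4), max_eq_left (sub_le1 (mul_le1 h1 h4) (mul_le1 h2 h3))]
    refine ⟨⟨⟨ha, hb, hc, hd⟩, add_le1 (mul_le1 ha h2) (mul_le1 hb h4),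
      add_le1 (mul_le1 hc h2) (mul_le1 hd h4), add_le1 (mul_le1 ha h1) (mul_le1 hb h3),
      add_le1 (mul_le1 hc h1) (mul_le1 hd h3)⟩, ?_, ?_⟩
    · rw [h5]
      exact mul_le_mul_of_nonneg_left (mx_le.2 ⟨sub_le1 h1 h4, h3, h2⟩) hD'.le
    · rw [h5, mul_one]

open Classical in
/-- the region-restricted integrand -/
noncomputable def PhiR (w : ℕ → ℕ → ℝ≥0∞) (s : ℝ) (d : ℚ_[p]) (R : VV p → Prop) (v : VV p) : ℝ≥0∞ :=
  if (v ∈ LL p ∧ mcoord (Fmap2 v) ≤ mcoord (Fmap1 v) ∧ ‖(Fmap1 v).1‖ = mcoord (Fmap1 v)) ∧ R v then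
    Hv w s d v else 0

theorem meas_PhiR (w : ℕ → ℕ → ℝ≥0∞) (s : ℝ) (d : ℚ_[p]) (hd : d ≠ 0) (R : VV p → Prop)
    (hR : MeasurableSet {v | R v}) : Measurable (PhiR w s d R) := by
  unfold PhiR
  refine Measurable.ite ?_ (meas_Hv w s d hd) measurable_const
  refine MeasurableSet.inter (MeasurableSet.inter meas_LL (MeasurableSet.inter ?_ ?_)) hR
  · exact measurableSet_le meas_m2 meas_m1
  · exact measurableSet_eq_fun (meas_F1.fst.norm) meas_m1

open Classical in
theorem reg (hp : Odd p) (w : ℕ → ℕ → ℝ≥0∞) (s : ℝ) (hs : 1 < s) (d : ℚ_[p]) (hd : ‖d‖ = (p : ℝ)⁻¹)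
    (μ : Measure (VV p)) [μ.IsAddHaarMeasure] (hμ : μ (LL p) = 1)
    (R : VV p → Prop) (hR : MeasurableSet {v | R v})
    (χ : ℚ_[p] → ℝ≥0∞) (hχ : Measurable χ) (κ : ℝ)
    (hκ : ∫⁻ x, χ x ∂(eta p) = ENNReal.ofReal κ) (G : ℚ_[p] → ℚ_[p] → ℚ_[p] → ℝ≥0∞)
    (hG : Measurable (fun z : ℚ_[p] × ℚ_[p] × ℚ_[p] => G z.1 z.2.1 z.2.2))
    (hRG : ∀ a b c e n2 n4 n1 n3 : ℚ_[p], a * e - b * c ≠ 0 → ‖n2‖ ≤ 1 → ‖n4‖ ≤ 1 → ‖n1‖ ≤ 1 →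
      ‖n3‖ ≤ 1 → (if R (VN a b c e n2 n4 n1 n3) then
        H w s d ((n1 - n4) ^ 2 + 4 * n3 * n2) 1 (mx (n1 - n4) n3 n2) else 0) =
        χ (n1 + n4) * G (n1 - n4) n3 n2) :
    ∫⁻ v, PhiR w s d R v ∂μ = ZZ p (2 * s - 2) *
      (ENNReal.ofReal κ * ∫⁻ w, ∫⁻ u, ∫⁻ v, G w u v ∂(eta p) ∂(eta p) ∂(eta p)) := by
  have hd0 : d ≠ 0 := by
    intro h; rw [h, norm_zero] at hd; exact (inv_ne_zero p_ne) hd.symm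
  rw [chart μ hμ _ (meas_PhiR w s d hd0 R hR)]
  swap
  · intro a b c e r2 r4 r1 r3 h0
    unfold PhiR
    split_ifs with h
    · obtain ⟨⟨-, -, h2⟩, -⟩ := h
      have h3 : (Fmap1 (mkV a b c e r2 r4 r1 r3)).1 = 0 := by
        rw [← h0]; simp [Fmap1, mkV]
      rw [h3, norm_zero] at h2
      have h4 : (Fmap1 (mkV a b c e r2 r4 r1 r3)).2.1 = 0 := by
        rw [← norm_le_zero_iff, h2]; exact (le_max_right _ _).trans (le_max_left _ _)
      apply H_not
      rw [Pq_disc1, h3, h4]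
      simpa using zero_not_Dset d hd
    · rfl
  have key : ∀ a b c e n2 n4 n1 n3 : ℚ_[p], ENNReal.ofReal (‖a * e - b * c‖ ^ 2) *
      PhiR w s d R (VN a b c e n2 n4 n1 n3) =
      if (‖a‖ ≤ 1 ∧ ‖b‖ ≤ 1 ∧ ‖c‖ ≤ 1 ∧ ‖e‖ ≤ 1) ∧ ‖n2‖ ≤ 1 ∧ ‖n4‖ ≤ 1 ∧ ‖n1‖ ≤ 1 ∧ ‖n3‖ ≤ 1 then
        ENNReal.ofReal (‖a * e - b * c‖ ^ (2 * s - 2)) * (χ (n1 + n4) * G (n1 - n4) n3 n2) else 0 := by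
    intro a b c e n2 n4 n1 n3
    by_cases hD : a * e - b * c = 0
    · have h2 : (0 : ℝ) ^ (2 * s - 2) = 0 := Real.zero_rpow (by linarith)
      simp [hD, h2]
    · have hD' : 0 < ‖a * e - b * c‖ := norm_pos_iff.2 hD
      unfold PhiR
      simp only [cond_iff hp _ _ _ _ _ _ _ _ hD]
      split_ifs with h1 h2 h2
      · obtain ⟨k1, k2, k3, k4⟩ := h1.1.2
        rw [← hRG a b c e n2 n4 n1 n3 hD k1 k2 k3 k4, if_pos h1.2]
        have hm := ((cond_iff hp a b c e n2 n4 n1 n3 hD).2 h1.1).2.2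
        unfold Hv
        rw [← hm, m2_VN, P_VN, F1_VN]
        have := H_scale w s d (a * e - b * c) ((n1 - n4) ^ 2 + 4 * n3 * n2) hD 1 (mx (n1 - n4) n3 n2)
        rw [mul_one] at this
        simp only
        rw [this, ← mul_assoc, ← ENNReal.ofReal_mul (by positivity), ← Real.rpow_two,
          ← Real.rpow_add hD']
        congr 3; ring
      · exact absurd h1.1 h2
      · obtain ⟨k1, k2, k3, k4⟩ := h2.2
        rw [← hRG a b c e n2 n4 n1 n3 hD k1 k2 k3 k4, if_neg (fun h => h1 ⟨h2, h⟩)]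
        simp
      · simp
  change ∫⁻ a, ∫⁻ b, ∫⁻ c, ∫⁻ e, ∫⁻ n2, ∫⁻ n4, ∫⁻ n1, ∫⁻ n3, ENNReal.ofReal (‖a * e - b * c‖ ^ 2) *
      PhiR w s d R (VN a b c e n2 n4 n1 n3) = _
  rw [← J4 hp χ hχ κ hκ G hG]
  unfold ZZ
  rw [← mulconst4 _ (by fun_prop)]
  refine vol_to_eta (fun a ha => ?_) (fun a ha => by simp only [key]; simp [ha])
  refine vol_to_eta (fun b hb => ?_) (fun b hb => by simp only [key]; simp [hb])
  refine vol_to_eta (fun c hc => ?_) (fun c hc => by simp only [key]; simp [hc])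
  refine vol_to_eta (fun e he => ?_) (fun e he => by simp only [key]; simp [he])
  simp only [← lint_cmul]
  refine vol_to_eta (fun n2 h2 => ?_) (fun n2 h2 => by simp only [key]; simp [h2])
  refine vol_to_eta (fun n4 h4 => ?_) (fun n4 h4 => by simp only [key]; simp [h4])
  refine vol_to_eta (fun n1 h1 => ?_) (fun n1 h1 => by simp only [key]; simp [h1])
  refine vol_to_eta (fun n3 h3 => ?_) (fun n3 h3 => by simp only [key]; simp [h3])
  rw [key, if_pos ⟨⟨ha, hb, hc, he⟩, h2, h4, h1, h3⟩]

end Z19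

namespace Z19
open scoped ENNReal
open Metric

variable {p : ℕ} [hpp : Fact p.Prime]

theorem F1_rho (v : VV p) : Fmap1 (rho p v) = ((Fmap1 v).2.2, (Fmap1 v).2.1, (Fmap1 v).1) := by
  simp [Fmap1, rho, Fin.rev]; ring

theorem F2_rho (v : VV p) : Fmap2 (rho p v) = (-(Fmap2 v).1, -(Fmap2 v).2.1, -(Fmap2 v).2.2) := by
  simp [Fmap2, rho, Fin.rev]; refine ⟨?_, ?_, ?_⟩ <;> ring

theorem F1_tau (v : VV p) : Fmap1 (tau p v) = Fmap2 v := by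
  simp [Fmap1, Fmap2, tau]; ring_nf; simp

theorem F2_tau (v : VV p) : Fmap2 (tau p v) = Fmap1 v := by
  simp [Fmap1, Fmap2, tau]; ring_nf; simp

theorem m1_rho (v : VV p) : mcoord (Fmap1 (rho p v)) = mcoord (Fmap1 v) := by
  rw [F1_rho]; simp only [mcoord]
  rw [max_comm, max_comm ‖(Fmap1 v).2.2‖, max_assoc]

theorem m2_rho (v : VV p) : mcoord (Fmap2 (rho p v)) = mcoord (Fmap2 v) := by
  rw [F2_rho]; simp only [mcoord, norm_neg]

theorem Pq_rho (v : VV p) : Pq (rho p v) = Pq v := by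
  rw [Pq_disc1, Pq_disc1, F1_rho]; ring

theorem Pq_tau (v : VV p) : Pq (tau p v) = Pq v := by
  rw [Pq_disc1, Pq_disc2, F1_tau]

theorem Hv_rho (w : ℕ → ℕ → ℝ≥0∞) (s : ℝ) (d : ℚ_[p]) (v : VV p) : Hv w s d (rho p v) = Hv w s d v := by
  unfold Hv; rw [Pq_rho, m1_rho, m2_rho]

theorem Hv_tau (w : ℕ → ℕ → ℝ≥0∞) (hw : ∀ a b, w a b = w b a) (s : ℝ) (d : ℚ_[p]) (v : VV p) :
    Hv w s d (tau p v) = Hv w s d v := by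
  unfold Hv; rw [Pq_tau, F1_tau, F2_tau, H_symm w hw]

theorem mem_tau {v : VV p} : tau p v ∈ LL p ↔ v ∈ LL p := by
  conv_rhs => rw [← tau_LL]
  rfl

theorem mem_rho {v : VV p} : rho p v ∈ LL p ↔ v ∈ LL p := by
  conv_rhs => rw [← rho_LL]
  rfl

theorem disc_cases (hp : Odd p) (d : ℚ_[p]) (hd : ‖d‖ = (p : ℝ)⁻¹) (t : ℚ_[p] × ℚ_[p] × ℚ_[p])
    (h : t.2.1 ^ 2 - 4 * t.1 * t.2.2 ∈ Dset d) : ‖t.1‖ = mcoord t ∨ ‖t.2.2‖ = mcoord t := by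
  obtain ⟨a, b, c⟩ := t
  simp only at h ⊢
  by_contra hc
  rw [not_or] at hc
  obtain ⟨h1, h2⟩ := hc
  have l1 : ‖a‖ ≤ mcoord (a, b, c) := (le_max_left _ _).trans (le_max_left _ _)
  have l2 : ‖b‖ ≤ mcoord (a, b, c) := (le_max_right _ _).trans (le_max_left _ _)
  have l3 : ‖c‖ ≤ mcoord (a, b, c) := le_max_right _ _
  have k1 := lt_of_le_of_ne l1 h1
  have k3 := lt_of_le_of_ne l3 h2
  have kb : mcoord (a, b, c) = ‖b‖ := by
    by_contra hb
    have k2 := lt_of_le_of_ne l2 (Ne.symm hb)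
    have : mcoord (a, b, c) < mcoord (a, b, c) := max_lt (max_lt k1 k2) k3
    exact lt_irrefl _ this
  rw [kb] at k1 k3
  have hb0 : b ≠ 0 := by
    intro h; rw [h, norm_zero] at k1; exact absurd (norm_nonneg a) (not_le.2 k1)
  have hb : 0 < ‖b‖ := norm_pos_iff.2 hb0
  have e : b ^ 2 - 4 * a * c = b ^ 2 * (1 - 4 * (a / b) * (c / b)) := by field_simp
  rw [e, Dset_sq d b _ hb0] at h
  have hs : ‖-(4 * (a / b) * (c / b))‖ < 1 := by
    rw [norm_neg, norm_mul, norm_mul, norm_four hp, one_mul, norm_div, norm_div]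
    have u1 : ‖a‖ / ‖b‖ < 1 := (div_lt_one hb).2 k1
    have u2 : ‖c‖ / ‖b‖ < 1 := (div_lt_one hb).2 k3
    exact mul_lt_one_of_nonneg_of_lt_one_left (by positivity) u1 u2.le
  rw [sub_eq_add_neg] at h
  have hle : ‖1 + -(4 * (a / b) * (c / b))‖ ≤ 1 := add_le1 (by simp) hs.le
  have := (norm_add_lt_one_iff hs).1 (Dset_lt d hd h hle)
  simp at this

/-- the four region predicates -/
def RB (v : VV p) : Prop := ‖(Fmap1 v).2.2‖ < mcoord (Fmap1 v)
def RC (v : VV p) : Prop := mcoord (Fmap2 v) < mcoord (Fmap1 v)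

theorem meas_RB : MeasurableSet {v : VV p | RB v} :=
  measurableSet_lt (meas_F1.snd.snd.norm) meas_m1

theorem meas_RC : MeasurableSet {v : VV p | RC v} := measurableSet_lt meas_m2 meas_m1

theorem half_id (hp : Odd p) (w : ℕ → ℕ → ℝ≥0∞) (s : ℝ) (d : ℚ_[p]) (hd : ‖d‖ = (p : ℝ)⁻¹) (v : VV p)
    (S : VV p → Prop) (hS : S (rho p v) ↔ S v) (hv : v ∈ LL p) (hD : Pq v ∈ Dset d)
    (hm : mcoord (Fmap2 v) ≤ mcoord (Fmap1 v)) (hSv : S v) :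
    PhiR w s d S v + PhiR w s d (fun v => RB v ∧ S v) (rho p v) = Hv w s d v := by
  unfold PhiR RB
  rw [Hv_rho]
  simp only [mem_rho, m1_rho, m2_rho, hS, hv, hm, hSv, true_and, and_true]
  simp only [F1_rho]
  have h1 := disc_cases hp d hd (Fmap1 v) (by rw [← Pq_disc1]; exact hD)
  have l1 : ‖(Fmap1 v).1‖ ≤ mcoord (Fmap1 v) := (le_max_left _ _).trans (le_max_left _ _)
  by_cases h : ‖(Fmap1 v).1‖ = mcoord (Fmap1 v)
  · simp [h]
  · have h2 := h1.resolve_left h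
    simp [h, h2, lt_of_le_of_ne l1 h]

theorem PhiR_zero (w : ℕ → ℕ → ℝ≥0∞) (s : ℝ) (d : ℚ_[p]) (v : VV p)
    (S : VV p → Prop) (h : ¬ (mcoord (Fmap2 v) ≤ mcoord (Fmap1 v) ∧ S v)) :
    PhiR w s d S v = 0 := by
  unfold PhiR
  rw [if_neg]
  tauto

open Classical in
theorem point_id (hp : Odd p) (w : ℕ → ℕ → ℝ≥0∞) (hw : ∀ a b, w a b = w b a) (s : ℝ) (d : ℚ_[p])
    (hd : ‖d‖ = (p : ℝ)⁻¹) (v : VV p) :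
    (LL p).indicator (Hv w s d) v =
      (PhiR w s d (fun _ => True) v + PhiR w s d (fun v => RB v ∧ True) (rho p v)) +
      (PhiR w s d RC (tau p v) + PhiR w s d (fun v => RB v ∧ RC v) (rho p (tau p v))) := by
  by_cases hv : v ∈ LL p
  swap
  · rw [Set.indicator_of_notMem hv]
    unfold PhiR
    simp [mem_rho, mem_tau, hv]
  rw [Set.indicator_of_mem hv]
  by_cases hD : Pq v ∈ Dset d
  swap
  · have h0 : Hv w s d v = 0 := H_not w s d hD _ _
    unfold PhiR
    simp [Hv_rho, Hv_tau w hw, h0]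
  have hS : RC (rho p (tau p v)) ↔ RC (tau p v) := by unfold RC; rw [m1_rho, m2_rho]
  rcases le_or_gt (mcoord (Fmap2 v)) (mcoord (Fmap1 v)) with h | h
  · have h' : ¬ RC (tau p v) := by unfold RC; rw [F1_tau, F2_tau]; exact not_lt.2 h
    rw [half_id hp w s d hd v (fun _ => True) Iff.rfl hv hD h trivial,
      PhiR_zero w s d (tau p v) _ (fun hh => h' hh.2),
      PhiR_zero w s d (rho p (tau p v)) _ (fun hh => h' (hS.1 hh.2.2)), add_zero, add_zero]
  · have h' : RC (tau p v) := by unfold RC; rw [F1_tau, F2_tau]; exact h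
    rw [half_id hp w s d hd (tau p v) RC hS (mem_tau.2 hv) (by rwa [Pq_tau])
      (by rw [F1_tau, F2_tau]; exact h.le) h', PhiR_zero w s d v _ (fun hh => not_le.2 h hh.1),
      PhiR_zero w s d (rho p v) _ (fun hh => not_le.2 h (by rw [← m1_rho, ← m2_rho]; exact hh.1)),
      Hv_tau w hw, add_zero, zero_add]

theorem rho_meas : Measurable (rho p) := rho_cont.measurable
theorem tau_meas : Measurable (tau p) := tau_cont.measurable

theorem RB_VN (hp : Odd p) (d : ℚ_[p]) (hd : ‖d‖ = (p : ℝ)⁻¹) (a b c e n2 n4 n1 n3 : ℚ_[p])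
    (hD : a * e - b * c ≠ 0) (h2 : ‖n2‖ ≤ 1) (h4 : ‖n4‖ ≤ 1) (h1 : ‖n1‖ ≤ 1) (h3 : ‖n3‖ ≤ 1)
    (hP : (n1 - n4) ^ 2 + 4 * n3 * n2 ∈ Dset d) :
    RB (VN a b c e n2 n4 n1 n3) ↔ ‖n1 + n4‖ < 1 := by
  have hD' : 0 < ‖a * e - b * c‖ := norm_pos_iff.2 hD
  have h5 : max (max 1 ‖n1 + n4‖) ‖n1 * n4 - n2 * n3‖ = 1 := by
      rw [max_eq_left (add_le1 h1 h4), max_eq_left (sub_le1 (mul_le1 h1 h4) (mul_le1 h2 h3))]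
  unfold RB
  rw [m1_VN, F1_VN, h5]
  simp only
  rw [norm_mul, mul_lt_mul_iff_right₀ hD']
  have hle : ‖(n1 - n4) ^ 2 + 4 * n3 * n2‖ ≤ 1 := by
    refine add_le1 ?_ (mul_le1 (mul_le1 (norm_four hp).le h3) h2)
    rw [sq]; exact mul_le1 (sub_le1 h1 h4) (sub_le1 h1 h4)
  have hlt := Dset_lt d hd hP hle
  have e1 : (n1 + n4) ^ 2 = 4 * (n1 * n4 - n2 * n3) + ((n1 - n4) ^ 2 + 4 * n3 * n2) := by ring
  have e2 : ‖n1 + n4‖ < 1 ↔ ‖(n1 + n4) ^ 2‖ < 1 := by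
    rw [norm_pow, sq_lt_one_iff₀ (norm_nonneg _)]
  rw [e2, e1, norm_add_lt_one_iff hlt, norm_mul, norm_four hp, one_mul]

theorem RC_VN (a b c e n2 n4 n1 n3 : ℚ_[p])
    (hD : a * e - b * c ≠ 0) (h2 : ‖n2‖ ≤ 1) (h4 : ‖n4‖ ≤ 1) (h1 : ‖n1‖ ≤ 1) (h3 : ‖n3‖ ≤ 1) :
    RC (VN a b c e n2 n4 n1 n3) ↔ mx (n1 - n4) n3 n2 < 1 := by
  have hD' : 0 < ‖a * e - b * c‖ := norm_pos_iff.2 hD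
  have h5 : max (max 1 ‖n1 + n4‖) ‖n1 * n4 - n2 * n3‖ = 1 := by
      rw [max_eq_left (add_le1 h1 h4), max_eq_left (sub_le1 (mul_le1 h1 h4) (mul_le1 h2 h3))]
  unfold RC
  rw [m1_VN, m2_VN, h5, mul_lt_mul_iff_right₀ hD']

open Classical in
theorem main_lint (hp : Odd p) (w : ℕ → ℕ → ℝ≥0∞) (hw : ∀ a b, w a b = w b a) (s : ℝ) (hs : 1 < s)
    (d : ℚ_[p]) (hd : ‖d‖ = (p : ℝ)⁻¹) (μ : Measure (VV p)) [μ.IsAddHaarMeasure]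
    (hμ : μ (LL p) = 1) :
    ∫⁻ v in LL p, Hv w s d v ∂μ = ZZ p (2 * s - 2) * ENNReal.ofReal (1 + (p : ℝ)⁻¹) *
      (∑' c, TT w s p c + ∑' c, TT w s p (c + 1)) := by
  have hd0 : d ≠ 0 := by
    intro h; rw [h, norm_zero] at hd; exact (inv_ne_zero p_ne) hd.symm
  have mBT : MeasurableSet {v : VV p | RB v ∧ True} := by simpa using meas_RB
  have mBC : MeasurableSet {v : VV p | RB v ∧ RC v} := meas_RB.inter meas_RC
  have mA := meas_PhiR w s d hd0 (fun _ => True) (by simp)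
  have mB := meas_PhiR w s d hd0 (fun v => RB v ∧ True) mBT
  have mC := meas_PhiR w s d hd0 RC meas_RC
  have mD := meas_PhiR w s d hd0 (fun v => RB v ∧ RC v) mBC
  have mH : Measurable (fun z : ℚ_[p] × ℚ_[p] × ℚ_[p] =>
      H w s d (z.1 ^ 2 + 4 * z.2.1 * z.2.2) 1 (mx z.1 z.2.1 z.2.2)) :=
    meas_H' w s d hd0 (by fun_prop) measurable_const (by fun_prop)
  have mH2 : Measurable (fun z : ℚ_[p] × ℚ_[p] × ℚ_[p] => if mx z.1 z.2.1 z.2.2 < 1 then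
      H w s d (z.1 ^ 2 + 4 * z.2.1 * z.2.2) 1 (mx z.1 z.2.1 z.2.2) else 0) :=
    Measurable.ite (measurableSet_lt meas_mx measurable_const) mH measurable_const
  have k1 : ∫⁻ x : ℚ_[p], (1 : ℝ≥0∞) ∂(eta p) = ENNReal.ofReal 1 := by
    rw [eta_const]; simp
  have kp : ∫⁻ x : ℚ_[p], (if ‖x‖ < 1 then (1 : ℝ≥0∞) else 0) ∂(eta p) = ENNReal.ofReal (p : ℝ)⁻¹ := by
    rw [eta_small_const, mul_one]
  have mχ : Measurable (fun x : ℚ_[p] => if ‖x‖ < 1 then (1 : ℝ≥0∞) else 0) :=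
    Measurable.ite meas_norm_lt measurable_const measurable_const
  rw [← lintegral_indicator meas_LL]
  simp only [point_id hp w hw s d hd]
  have mB' : Measurable (fun v => PhiR w s d (fun v => RB v ∧ True) (rho p v)) := mB.comp rho_meas
  have mC' : Measurable (fun v => PhiR w s d RC (tau p v)) := mC.comp tau_meas
  have mAB : Measurable (fun v => PhiR w s d (fun _ => True) v +
    PhiR w s d (fun v => RB v ∧ True) (rho p v)) := mA.add mB'
  rw [lintegral_add_left mAB, lintegral_add_left mA, lintegral_add_left mC',
    lint_tau μ hμ (fun v => PhiR w s d (fun v => RB v ∧ RC v) (rho p v)) (mD.comp rho_meas),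
    lint_rho μ hμ _ mB, lint_rho μ hμ _ mD, lint_tau μ hμ _ mC]
  rw [reg hp w s hs d hd μ hμ _ (by simp) (fun _ => 1) measurable_const 1 k1
      (fun x u v => H w s d (x ^ 2 + 4 * u * v) 1 (mx x u v)) mH,
    reg hp w s hs d hd μ hμ _ mBT _ mχ _ kp
      (fun x u v => H w s d (x ^ 2 + 4 * u * v) 1 (mx x u v)) mH,
    reg hp w s hs d hd μ hμ _ meas_RC (fun _ => 1) measurable_const 1 k1
      (fun x u v => if mx x u v < 1 then H w s d (x ^ 2 + 4 * u * v) 1 (mx x u v) else 0) mH2,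
    reg hp w s hs d hd μ hμ _ mBC _ mχ _ kp
      (fun x u v => if mx x u v < 1 then H w s d (x ^ 2 + 4 * u * v) 1 (mx x u v) else 0) mH2]
  · rw [J_eq hp w s d hd, Jlt_eq hp w s d hd, ENNReal.ofReal_add zero_le_one (inv_nonneg.2 p_pos.le)]
    ring
  · intro a b c e n2 n4 n1 n3 hD h2 h4 h1 h3
    by_cases hP : (n1 - n4) ^ 2 + 4 * n3 * n2 ∈ Dset d
    · simp only [RB_VN hp d hd a b c e n2 n4 n1 n3 hD h2 h4 h1 h3 hP,
        RC_VN a b c e n2 n4 n1 n3 hD h2 h4 h1 h3]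
      split_ifs <;> first | (simp; done) | (exfalso; tauto)
    · simp only [H_not w s d hP]; simp
  · intro a b c e n2 n4 n1 n3 hD h2 h4 h1 h3
    simp only [RC_VN a b c e n2 n4 n1 n3 hD h2 h4 h1 h3, one_mul]
  · intro a b c e n2 n4 n1 n3 hD h2 h4 h1 h3
    by_cases hP : (n1 - n4) ^ 2 + 4 * n3 * n2 ∈ Dset d
    · simp only [RB_VN hp d hd a b c e n2 n4 n1 n3 hD h2 h4 h1 h3 hP, and_true]
      split_ifs <;> simp
    · simp only [H_not w s d hP]; simp
  · intro a b c e n2 n4 n1 n3 hD h2 h4 h1 h3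
    simp

end Z19

namespace Z19
open scoped ENNReal

theorem hs_congr {f g : ℕ → ℝ} {a : ℝ} (h : HasSum f a) (e : ∀ n, g n = f n) : HasSum g a := by
  rwa [show g = f from funext e]

theorem tsum_antidiag {x : ℕ × ℕ → ℝ} (hx : Summable x) :
    HasSum (fun n => ∑ kl ∈ Finset.HasAntidiagonal.antidiagonal n, x kl) (∑' z, x z) := by
  have h1 : Summable (x ∘ Finset.HasAntidiagonal.sigmaAntidiagonalEquivProd) :=
    (Equiv.summable_iff Finset.HasAntidiagonal.sigmaAntidiagonalEquivProd).2 hx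
  have h2 := h1.hasSum.sigma (fun n => hasSum_fintype _)
  have h3 : ∑' z, (x ∘ Finset.HasAntidiagonal.sigmaAntidiagonalEquivProd) z = ∑' z, x z :=
    Finset.HasAntidiagonal.sigmaAntidiagonalEquivProd.tsum_eq x
  rw [h3] at h2
  refine hs_congr (h2) (fun n => ?_)
  exact (Finset.sum_coe_sort (Finset.HasAntidiagonal.antidiagonal n) x).symm

theorem seq_bound {q lam M : ℝ} (hq : 1 ≤ q) (hlam : |lam| ≤ q + 1) (hM : M = 2 * q + 2) (a : ℕ → ℝ)
    (h0 : a 0 = 1) (h1 : |a 1| ≤ M) (hr : ∀ n, a (n + 2) = lam * a (n + 1) - q * a n) (n : ℕ) :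
    |a n| ≤ M ^ n ∧ |a (n + 1)| ≤ M ^ (n + 1) := by
  have hM0 : 0 < M := by rw [hM]; linarith
  induction n with
  | zero => simp [h0, h1]
  | succ n ih =>
    refine ⟨ih.2, ?_⟩
    rw [hr]
    calc |lam * a (n + 1) - q * a n| ≤ |lam * a (n + 1)| + |q * a n| := abs_sub _ _
      _ = |lam| * |a (n + 1)| + q * |a n| := by rw [abs_mul, abs_mul, abs_of_pos (by linarith : 0 < q)]
      _ ≤ (q + 1) * M ^ (n + 1) + q * M ^ n := by
        gcongr
        · exact ih.2
        · exact ih.1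
      _ = ((q + 1) * M + q) * M ^ n := by ring
      _ ≤ (M * M) * M ^ n := by
        gcongr
        rw [hM]; nlinarith
      _ = M ^ (n + 1 + 1) := by ring

theorem geom_sum {Q M : ℝ} (hQ : 0 ≤ Q) (hM : 0 ≤ M) (h : M ^ 2 * Q < 1) (f : ℕ → ℝ) (C : ℝ)
    (hf : ∀ n, |f n| ≤ C * (M ^ 2) ^ n) : Summable (fun n => f n * Q ^ n) := by
  refine Summable.of_norm_bounded (g := fun n => C * (M ^ 2 * Q) ^ n) ?_ ?_
  · exact (summable_geometric_of_lt_one (by positivity) h).mul_left C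
  · intro n
    rw [Real.norm_eq_abs, abs_mul, abs_of_nonneg (pow_nonneg hQ n), mul_pow, ← mul_assoc]
    exact mul_le_mul_of_nonneg_right (hf n) (pow_nonneg hQ n)

theorem U_val {q lam Q M : ℝ} (hM : 1 ≤ M) (hQ : 0 < Q)
    (hMQ : M ^ 2 * Q < 1) (S : ℕ → ℝ) (hS0 : S 0 = 1) (hS1 : S 1 = lam)
    (hr : ∀ n, S (n + 2) = lam * S (n + 1) - q * S n) (hb : ∀ n, |S n| ≤ M ^ n) :
    ∃ U W : ℝ, HasSum (fun n => S n ^ 2 * Q ^ n) U ∧ HasSum (fun n => S n * S (n + 1) * Q ^ n) W ∧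
      W * (1 + q * Q) = lam * U ∧
      U - 1 - lam ^ 2 * Q = lam ^ 2 * Q * (U - 1) - 2 * lam * q * Q ^ 2 * W + q ^ 2 * Q ^ 2 * U := by
  have hM0 : 0 ≤ M := by linarith
  have s1 : Summable (fun n => S n ^ 2 * Q ^ n) := by
    refine geom_sum hQ.le hM0 hMQ (fun n => S n ^ 2) 1 (fun n => ?_)
    rw [abs_pow, one_mul, ← pow_mul, mul_comm, pow_mul]
    exact pow_le_pow_left₀ (abs_nonneg _) (hb n) 2
  have s2 : Summable (fun n => S n * S (n + 1) * Q ^ n) := by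
    refine geom_sum hQ.le hM0 hMQ (fun n => S n * S (n + 1)) M (fun n => ?_)
    rw [abs_mul]
    calc |S n| * |S (n + 1)| ≤ M ^ n * M ^ (n + 1) :=
        mul_le_mul (hb _) (hb _) (abs_nonneg _) (pow_nonneg hM0 _)
      _ = M * (M ^ 2) ^ n := by ring
  refine ⟨_, _, s1.hasSum, s2.hasSum, ?_, ?_⟩
  · set U := ∑' n, S n ^ 2 * Q ^ n
    set W := ∑' n, S n * S (n + 1) * Q ^ n
    have e1 := (hasSum_nat_add_iff' 1).2 s2.hasSum
    have e2 := (hasSum_nat_add_iff' 1).2 s1.hasSum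
    simp only [Finset.sum_range_one, pow_zero, mul_one, hS0, zero_add, hS1, one_mul, one_pow] at e1 e2
    have e3 : HasSum (fun n => S (n + 1) * S (n + 1 + 1) * Q ^ (n + 1))
        (lam * (U - 1) - q * Q * W) := by
      refine hs_congr ((e2.mul_left lam).sub (s2.hasSum.mul_left (q * Q))) (fun n => ?_)
      rw [show n + 1 + 1 = n + 2 from rfl, hr]; ring
    have := e1.unique e3
    linarith
  · set U := ∑' n, S n ^ 2 * Q ^ n
    set W := ∑' n, S n * S (n + 1) * Q ^ n
    have e2 := (hasSum_nat_add_iff' 1).2 s1.hasSum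
    have e1 := (hasSum_nat_add_iff' 2).2 s1.hasSum
    simp only [Finset.sum_range_succ, Finset.sum_range_zero, pow_zero, mul_one, hS0, zero_add, hS1,
      one_pow, pow_one] at e1 e2
    have e3 : HasSum (fun n => S (n + 2) ^ 2 * Q ^ (n + 2))
        (lam ^ 2 * Q * (U - 1) - 2 * lam * q * Q ^ 2 * W + q ^ 2 * Q ^ 2 * U) := by
      refine hs_congr (((e2.mul_left (lam ^ 2 * Q)).sub (s2.hasSum.mul_left (2 * lam * q * Q ^ 2))).add
        (s1.hasSum.mul_left (q ^ 2 * Q ^ 2))) (fun n => ?_)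
      rw [hr]; ring
    have := e1.unique e3
    linarith

/-- the final double sum -/
theorem double_sum {q lam Q M : ℝ} (hq : 1 ≤ q) (hlam : |lam| ≤ q + 1) (hM : M = 2 * q + 2) (hQ : 0 < Q)
    (hMQ : M ^ 2 * Q < 1) (c : ℕ → ℝ) (h0 : c 0 = 1) (h1 : c 1 = lam - 1)
    (hr : ∀ n, c (n + 2) = lam * c (n + 1) - q * c n) :
    Summable (fun z : ℕ × ℕ => c (z.1 + z.2) * c z.2 * Q ^ (z.1 + z.2)) ∧
    Summable (fun z : ℕ × ℕ => c (z.1 + 1 + z.2) * c z.2 * Q ^ (z.1 + 1 + z.2)) ∧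
    ((∑' z : ℕ × ℕ, c (z.1 + z.2) * c z.2 * Q ^ (z.1 + z.2)) +
      ∑' z : ℕ × ℕ, c (z.1 + 1 + z.2) * c z.2 * Q ^ (z.1 + 1 + z.2)) *
      ((1 - q * Q) * ((1 + q * Q) ^ 2 - lam ^ 2 * Q)) = (1 - Q) * (1 + q * Q) := by
  have hM1 : 1 ≤ M := by rw [hM]; linarith
  have hM0 : 0 ≤ M := by linarith
  have hMQ' : M * Q < 1 := by nlinarith [mul_nonneg (mul_nonneg hM0 (sub_nonneg.2 hM1)) hQ.le]
  have cb : ∀ n, |c n| ≤ M ^ n := fun n => (seq_bound hq hlam hM c h0 (by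
    rw [h1, hM]; have := abs_le.1 hlam; rw [abs_le]; constructor <;> linarith) hr n).1
  let S : ℕ → ℝ := fun n => ∑ l ∈ Finset.range (n + 1), c l
  have Ss : ∀ n, S (n + 1) = S n + c (n + 1) := fun n => Finset.sum_range_succ _ _
  have hS0 : S 0 = 1 := by simp [S, h0]
  have hS1 : S 1 = lam := by rw [Ss, hS0, h1]; ring
  have hSr : ∀ n, S (n + 2) = lam * S (n + 1) - q * S n := by
    intro n
    induction n with
    | zero => rw [Ss, hr]; simp only [zero_add]; rw [hS1, h1, h0, hS0]; ring
    | succ n ih =>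
      have a := Ss (n + 2)
      have b := Ss (n + 1)
      have e := Ss n
      have f := hr (n + 1)
      simp only [add_assoc, Nat.reduceAdd] at a b e f ih ⊢
      linear_combination a + f + ih - lam * b + q * e
  have Sb : ∀ n, |S n| ≤ M ^ n := fun n => (seq_bound hq hlam hM S hS0 (by
    rw [hS1, hM]; linarith) hSr n).1
  have g : Summable (fun z : ℕ × ℕ => (M * Q) ^ z.1 * (M ^ 2 * Q) ^ z.2) :=
    Summable.mul_of_nonneg (summable_geometric_of_lt_one (by positivity) hMQ')
      (summable_geometric_of_lt_one (by positivity) hMQ) (fun n => by positivity)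
      (fun n => by positivity)
  have sx : Summable (fun z : ℕ × ℕ => c (z.1 + z.2) * c z.2 * Q ^ (z.1 + z.2)) := by
    refine Summable.of_norm_bounded g (fun z => ?_)
    rw [Real.norm_eq_abs, abs_mul, abs_mul, abs_of_nonneg (pow_nonneg hQ.le _)]
    calc |c (z.1 + z.2)| * |c z.2| * Q ^ (z.1 + z.2)
        ≤ M ^ (z.1 + z.2) * M ^ z.2 * Q ^ (z.1 + z.2) := by
          gcongr
          · exact cb _
          · exact cb _
      _ = _ := by ring
  have sy : Summable (fun z : ℕ × ℕ => c (z.1 + 1 + z.2) * c z.2 * Q ^ (z.1 + 1 + z.2)) := by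
    refine Summable.of_norm_bounded (g.mul_left (M * Q)) (fun z => ?_)
    rw [Real.norm_eq_abs, abs_mul, abs_mul, abs_of_nonneg (pow_nonneg hQ.le _)]
    calc |c (z.1 + 1 + z.2)| * |c z.2| * Q ^ (z.1 + 1 + z.2)
        ≤ M ^ (z.1 + 1 + z.2) * M ^ z.2 * Q ^ (z.1 + 1 + z.2) := by
          gcongr
          · exact cb _
          · exact cb _
      _ = _ := by ring
  refine ⟨sx, sy, ?_⟩
  obtain ⟨U, W, hU, hW, r1, r2⟩ := U_val hM1 hQ hMQ S hS0 hS1 hSr Sb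
  have ad : ∀ n, ∑ kl ∈ Finset.HasAntidiagonal.antidiagonal n, c kl.2 = S n := by
    intro n
    rw [Finset.Nat.sum_antidiagonal_eq_sum_range_succ (fun _ j => c j)]
    exact Finset.sum_range_reflect c (n + 1)
  have hx := tsum_antidiag sx
  have hy := tsum_antidiag sy
  set X := ∑' z : ℕ × ℕ, c (z.1 + z.2) * c z.2 * Q ^ (z.1 + z.2)
  set Y := ∑' z : ℕ × ℕ, c (z.1 + 1 + z.2) * c z.2 * Q ^ (z.1 + 1 + z.2)
  have hx' : HasSum (fun n => c n * S n * Q ^ n) X := by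
    refine hs_congr (hx) (fun n => ?_)
    rw [← ad n, Finset.mul_sum, Finset.sum_mul]
    refine Finset.sum_congr rfl fun kl hkl => ?_
    rw [Finset.HasAntidiagonal.mem_antidiagonal.1 hkl]
  have hy' : HasSum (fun n => c (n + 1) * S n * Q ^ (n + 1)) Y := by
    refine hs_congr (hy) (fun n => ?_)
    rw [← ad n, Finset.mul_sum, Finset.sum_mul]
    refine Finset.sum_congr rfl fun kl hkl => ?_
    rw [show kl.1 + 1 + kl.2 = kl.1 + kl.2 + 1 by ring, Finset.HasAntidiagonal.mem_antidiagonal.1 hkl]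
  have eY : Y = Q * W - Q * U := by
    refine hy'.unique ?_
    refine hs_congr ((hW.mul_left Q).sub (hU.mul_left Q)) (fun n => ?_)
    rw [Ss]; ring
  have eX : X = U - Q * W := by
    have e1 := (hasSum_nat_add_iff' 1).2 hx'
    have e2 := (hasSum_nat_add_iff' 1).2 hU
    simp only [Finset.sum_range_one, pow_zero, mul_one, hS0, h0, one_pow] at e1 e2
    have : HasSum (fun n => c (n + 1) * S (n + 1) * Q ^ (n + 1)) (U - 1 - Q * W) := by
      refine hs_congr (e2.sub (hW.mul_left Q)) (fun n => ?_)
      rw [Ss]; ring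
    have := e1.unique this
    linarith
  rw [eX, eY]
  have key : U * ((1 - q * Q) * ((1 + q * Q) ^ 2 - lam ^ 2 * Q)) = 1 + q * Q := by
    linear_combination (1 + q * Q) * r2 - 2 * lam * q * Q ^ 2 * r1
  linear_combination (1 - Q) * key

end Z19

namespace Z19
open scoped ENNReal

variable {p : ℕ} [hpp : Fact p.Prime]

theorem pow_id (s : ℝ) (c l : ℕ) :
    (p : ℝ)⁻¹ ^ (3 * c) * (p : ℝ)⁻¹ ^ (2 * l + 1) * ((p : ℝ)⁻¹ ^ (2 * c + 2 * l + 1)) ^ (s - 2) =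
      (p : ℝ) ^ (1 - s) * ((p : ℝ) ^ (c + l) * (p : ℝ) ^ l * ((p : ℝ) ^ (-2 * s)) ^ (c + l)) := by
  have hp0 := p_pos (p := p)
  have e : ∀ n : ℕ, (p : ℝ)⁻¹ ^ n = (p : ℝ) ^ (-(n : ℝ)) := by
    intro n; rw [Real.rpow_neg hp0.le, Real.rpow_natCast, inv_pow]
  rw [e, e, e, ← Real.rpow_mul hp0.le, ← Real.rpow_add hp0, ← Real.rpow_add hp0,
    ← Real.rpow_natCast ((p : ℝ) ^ (-2 * s)), ← Real.rpow_mul hp0.le, ← Real.rpow_natCast,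
    ← Real.rpow_natCast, ← Real.rpow_add hp0, ← Real.rpow_add hp0, ← Real.rpow_add hp0]
  congr 1; push_cast; ring

/-- the constant -/
noncomputable def KK (p : ℕ) (s : ℝ) : ℝ :=
  1 / 2 * (1 - (p : ℝ)⁻¹ ^ 2) * (1 - (p : ℝ)⁻¹) * (p : ℝ) ^ (1 - s)

theorem TT_real (g : ℕ → ℕ → ℝ) (s : ℝ) (c : ℕ) :
    TT (fun a b => ENNReal.ofReal (g a b)) s p c = ∑' l, ENNReal.ofReal
      (KK p s * (g (c + l) l * ((p : ℝ) ^ (c + l) * (p : ℝ) ^ l * ((p : ℝ) ^ (-2 * s)) ^ (c + l)))) := by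
  have hp0 := p_pos (p := p)
  have hi : (p : ℝ)⁻¹ < 1 := inv_lt_one_of_one_lt₀ p_gt_one
  have hi0 : 0 < (p : ℝ)⁻¹ := inv_pos.2 hp0
  have h1 : 0 ≤ 1 - (p : ℝ)⁻¹ := by linarith
  have h2 : 0 ≤ 1 - (p : ℝ)⁻¹ ^ 2 := by nlinarith
  unfold TT
  rw [← ENNReal.tsum_mul_left, ← ENNReal.tsum_mul_left]
  refine tsum_congr fun l => ?_
  rw [mul_comm (ENNReal.ofReal (g _ _)), ← ENNReal.ofReal_mul (by positivity),
    ← ENNReal.ofReal_mul (by positivity), ← ENNReal.ofReal_mul h2, ← ENNReal.ofReal_mul (by positivity)]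
  congr 1
  unfold KK
  have := pow_id (p := p) s c l
  linear_combination (1 / 2 * (1 - (p : ℝ)⁻¹ ^ 2) * (1 - (p : ℝ)⁻¹) * g (c + l) l) * this

theorem pm_sum {ι : Type*} {x : ι → ℝ} (hx : Summable x) :
    ∑' z, ENNReal.ofReal (x z) ≠ ∞ ∧
    (∑' z, ENNReal.ofReal (x z)).toReal - (∑' z, ENNReal.ofReal (- x z)).toReal = ∑' z, x z := by
  have a : ∀ y : ι → ℝ, Summable y → Summable (fun z => max (y z) 0) := by
    intro y hy
    refine Summable.of_nonneg_of_le (fun z => le_max_right _ _) (fun z => ?_) hy.norm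
    exact max_le (Real.le_norm_self _) (norm_nonneg _)
  have b : ∀ y : ι → ℝ, Summable y → ∑' z, ENNReal.ofReal (y z) =
      ENNReal.ofReal (∑' z, max (y z) 0) := by
    intro y hy
    rw [ENNReal.ofReal_tsum_of_nonneg (fun z => le_max_right _ _) (a y hy)]
    refine tsum_congr fun z => ?_
    rcases le_total 0 (y z) with h | h
    · rw [max_eq_left h]
    · rw [max_eq_right h, ENNReal.ofReal_of_nonpos h, ENNReal.ofReal_zero]
  refine ⟨by rw [b x hx]; exact ENNReal.ofReal_ne_top, ?_⟩
  rw [b x hx, b (fun z => - x z) hx.neg, ENNReal.toReal_ofReal (tsum_nonneg fun z => le_max_right _ _),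
    ENNReal.toReal_ofReal (tsum_nonneg fun z => le_max_right _ _),
    ← Summable.tsum_sub (a x hx) (a _ hx.neg)]
  refine tsum_congr fun z => ?_
  rcases le_total 0 (x z) with h | h
  · rw [max_eq_left h, max_eq_right (by linarith)]; ring
  · rw [max_eq_right h, max_eq_left (by linarith)]; ring

theorem intgl {α : Type*} [MeasurableSpace α] (μ : Measure α) (F : α → ℝ) (hF : Measurable F)
    (h1 : ∫⁻ v, ENNReal.ofReal (F v) ∂μ ≠ ∞) (h2 : ∫⁻ v, ENNReal.ofReal (-F v) ∂μ ≠ ∞) :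
    Integrable F μ ∧ ∫ v, F v ∂μ =
      (∫⁻ v, ENNReal.ofReal (F v) ∂μ).toReal - (∫⁻ v, ENNReal.ofReal (-F v) ∂μ).toReal := by
  have hi : Integrable F μ := by
    refine ⟨hF.aestronglyMeasurable, ?_⟩
    rw [hasFiniteIntegral_iff_norm]
    have : ∀ v, ENNReal.ofReal ‖F v‖ = ENNReal.ofReal (F v) + ENNReal.ofReal (-F v) := by
      intro v
      rcases le_total 0 (F v) with h | h
      · rw [Real.norm_of_nonneg h, ENNReal.ofReal_of_nonpos (by linarith : - F v ≤ 0), add_zero]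
      · rw [Real.norm_of_nonpos h, ENNReal.ofReal_of_nonpos h, zero_add]
    simp only [this]
    rw [lintegral_add_left hF.ennreal_ofReal]
    exact ENNReal.add_lt_top.2 ⟨h1.lt_top, h2.lt_top⟩
  exact ⟨hi, integral_eq_lintegral_pos_part_sub_lintegral_neg_part hi⟩

theorem lvl (hp : Odd p) (d : ℚ_[p]) (hd : ‖d‖ = (p : ℝ)⁻¹) (t : ℚ_[p] × ℚ_[p] × ℚ_[p])
    (h : t.2.1 ^ 2 - 4 * t.1 * t.2.2 ∈ Dset d) :
    ∃ l : ℕ, ‖d‖ * mcoord t ^ 2 = ‖t.2.1 ^ 2 - 4 * t.1 * t.2.2‖ * (p : ℝ) ^ (2 * l) := by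
  have hp0 := p_pos (p := p)
  have l1 : ‖t.1‖ ≤ mcoord t := (le_max_left _ _).trans (le_max_left _ _)
  have l2 : ‖t.2.1‖ ≤ mcoord t := (le_max_right _ _).trans (le_max_left _ _)
  have l3 : ‖t.2.2‖ ≤ mcoord t := le_max_right _ _
  have hm0 : 0 ≤ mcoord t := (norm_nonneg _).trans l1
  obtain ⟨x, hx⟩ : ∃ x : ℚ_[p], ‖x‖ = mcoord t := by
    rcases disc_cases hp d hd t h with h | h
    exacts [⟨_, h⟩, ⟨_, h⟩]
  have hP : ‖t.2.1 ^ 2 - 4 * t.1 * t.2.2‖ ≤ mcoord t ^ 2 := by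
    rw [sub_eq_add_neg]
    refine (Padic.nonarchimedean _ _).trans (max_le ?_ ?_)
    · rw [norm_pow]; exact pow_le_pow_left₀ (norm_nonneg _) l2 2
    · rw [norm_neg, norm_mul, norm_mul, norm_four hp, one_mul, sq]
      exact mul_le_mul l1 l3 (norm_nonneg _) hm0
  have hx0 : x ≠ 0 := by
    intro h0
    rw [← hx, h0, norm_zero] at hP
    have : t.2.1 ^ 2 - 4 * t.1 * t.2.2 = 0 := by
      rw [← norm_le_zero_iff]; simpa using hP
    rw [this] at h
    exact zero_not_Dset d hd h
  have hxn : 0 < ‖x‖ := norm_pos_iff.2 hx0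
  obtain ⟨R, hR⟩ : ∃ R, t.2.1 ^ 2 - 4 * t.1 * t.2.2 = x ^ 2 * R :=
    ⟨(t.2.1 ^ 2 - 4 * t.1 * t.2.2) / x ^ 2, by field_simp⟩
  rw [hR] at h hP ⊢
  rw [Dset_sq d x R hx0] at h
  have hR1 : ‖R‖ ≤ 1 := by
    rw [norm_mul, norm_pow, ← hx] at hP
    have : 0 < ‖x‖ ^ 2 := by positivity
    by_contra hc
    nlinarith
  obtain ⟨l, hl⟩ := Dset_norm_nat d hd h hR1
  refine ⟨l, ?_⟩
  rw [norm_mul, norm_pow, hl, ← hx, hd, pow_succ, inv_pow]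
  field_simp
  ring

theorem Lv_of {δ P m : ℝ} (hδ : δ = (p : ℝ)⁻¹) (hP : 0 < P) {l : ℕ} (h : δ * m ^ 2 = P * (p : ℝ) ^ (2 * l)) :
    Lv p (m ^ 2 / P) = l := by
  have hp0 := p_pos (p := p)
  rw [hδ] at h
  rw [← Lv_eval (p := p) l]
  congr 1
  field_simp at h ⊢
  linear_combination h

/-- measurable version of `fs` -/
noncomputable def Fm (p : ℕ) [Fact p.Prime] (g : ℕ → ℕ → ℝ) (s : ℝ) (v : VV p) : ℝ :=
  g (Lv p (mcoord (Fmap1 v) ^ 2 / ‖Pq v‖)) (Lv p (mcoord (Fmap2 v) ^ 2 / ‖Pq v‖)) * ‖Pq v‖ ^ (s - 2)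

theorem meas_Fm (g : ℕ → ℕ → ℝ) (s : ℝ) : Measurable (Fm p g s) := by
  have hg : Measurable (fun z : ℕ × ℕ => g z.1 z.2) := measurable_of_countable _
  have a1 : Measurable (fun v : VV p => Lv p (mcoord (Fmap1 v) ^ 2 / ‖Pq v‖)) :=
    meas_Lv.comp ((meas_m1.pow_const 2).div meas_Pq.norm)
  have a2 : Measurable (fun v : VV p => Lv p (mcoord (Fmap2 v) ^ 2 / ‖Pq v‖)) :=
    meas_Lv.comp ((meas_m2.pow_const 2).div meas_Pq.norm)
  exact (hg.comp (a1.prodMk a2)).mul (meas_Pq.norm.pow_const _)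

theorem fs_eq (hp : Odd p) (d : ℤ_[p]) (hd : ‖(d : ℚ_[p])‖ = (p : ℝ)⁻¹) (β : ℕ → ℝ) (s : ℝ) {v : VV p}
    (hv : v ∈ Vd p d) : fs p d β s v = Fm p (fun a b => β a * β b) s v := by
  have hD : Pq v ∈ Dset (d : ℚ_[p]) := hv.2.2
  have hP0 : Pq v ≠ 0 := fun h => zero_not_Dset _ hd (h ▸ hD)
  have hPn : 0 < ‖Pq v‖ := norm_pos_iff.2 hP0
  have h1 := lvl hp _ hd (Fmap1 v) (by rw [← Pq_disc1]; exact hD)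
  have h2 := lvl hp _ hd (Fmap2 v) (by rw [← Pq_disc2]; exact hD)
  rw [← Pq_disc1] at h1
  rw [← Pq_disc2] at h2
  have h : Pq v ≠ 0 ∧
      (∃ l : ℕ, ‖(d : ℚ_[p])‖ * mcoord (Fmap1 v) ^ 2 = ‖Pq v‖ * (p : ℝ) ^ (2 * l)) ∧
      (∃ l : ℕ, ‖(d : ℚ_[p])‖ * mcoord (Fmap2 v) ^ 2 = ‖Pq v‖ * (p : ℝ) ^ (2 * l)) := ⟨hP0, h1, h2⟩
  unfold fs Fm
  rw [dif_pos h]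
  have e1 := h.2.1.choose_spec
  have e2 := h.2.2.choose_spec
  rw [Lv_of hd hPn e1, Lv_of hd hPn e2]

theorem Vd_eq (d : ℤ_[p]) : Vd p d = LL p ∩ Pq ⁻¹' Dset (d : ℚ_[p]) := by
  ext v
  simp only [Vd, LL, Dset, Set.mem_inter_iff, Set.mem_preimage, Set.mem_ofPred_eq, and_assoc]

theorem Vd_meas (d : ℤ_[p]) (hd : ‖(d : ℚ_[p])‖ = (p : ℝ)⁻¹) : MeasurableSet (Vd p d) := by
  have hd0 : (d : ℚ_[p]) ≠ 0 := by
    intro h; rw [h, norm_zero] at hd; exact (inv_ne_zero p_ne) hd.symm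
  rw [Vd_eq]; exact meas_LL.inter (meas_Pq (meas_Dset _ hd0))

theorem lint_Fm (d : ℤ_[p]) (hd : ‖(d : ℚ_[p])‖ = (p : ℝ)⁻¹) (μ : Measure (VV p)) (g : ℕ → ℕ → ℝ)
    (s : ℝ) : ∫⁻ v in Vd p d, ENNReal.ofReal (Fm p g s v) ∂μ =
      ∫⁻ v in LL p, Hv (fun a b => ENNReal.ofReal (g a b)) s (d : ℚ_[p]) v ∂μ := by
  rw [← lintegral_indicator (Vd_meas d hd), ← lintegral_indicator meas_LL]
  refine lintegral_congr fun v => ?_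
  by_cases hL : v ∈ LL p
  · rw [Set.indicator_of_mem hL]
    unfold Hv
    by_cases hD : Pq v ∈ Dset (d : ℚ_[p])
    · rw [Set.indicator_of_mem (by rw [Vd_eq]; exact ⟨hL, hD⟩), H_mem _ _ _ hD]
      unfold Fm
      rw [mul_comm, ENNReal.ofReal_mul (by positivity), mul_comm]
    · rw [Set.indicator_of_notMem (by rw [Vd_eq]; exact fun h => hD h.2), H_not _ _ _ hD]
  · rw [Set.indicator_of_notMem hL, Set.indicator_of_notMem (by rw [Vd_eq]; exact fun h => hL h.1)]

theorem main_val (hp : Odd p) (lam : ℝ) (hlam : |lam| ≤ p + 1)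
    (d : ℤ_[p]) (hd : ‖(d : ℚ_[p])‖ = (p : ℝ)⁻¹)
    (β : ℕ → ℝ) (hβ0 : β 0 = 1) (hβ1 : β 1 = (lam - 1) / p)
    (hrec : ∀ k : ℕ, p * β (k + 2) - lam * β (k + 1) + β k = 0)
    (μ : Measure (VV p)) [μ.IsAddHaarMeasure] (hμ : μ (LL p) = 1) (s : ℝ) (hs : 4 < s) :
    ∃ X : ℝ, X * ((1 - p * (p : ℝ) ^ (-2 * s)) * ((1 + p * (p : ℝ) ^ (-2 * s)) ^ 2 -
        lam ^ 2 * (p : ℝ) ^ (-2 * s))) = (1 - (p : ℝ) ^ (-2 * s)) * (1 + p * (p : ℝ) ^ (-2 * s)) ∧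
      IntegrableOn (fs p d β s) (Vd p d) μ ∧
      ∫ v in Vd p d, fs p d β s v ∂μ = (ZZ p (2 * s - 2)).toReal * (1 + (p : ℝ)⁻¹) * (KK p s * X) := by
  have hp0 := p_pos (p := p)
  have hp3 : (3 : ℝ) ≤ p := by
    have h2 := hpp.out.two_le
    have : p ≠ 2 := by rintro rfl; exact absurd hp (by decide)
    exact_mod_cast (by omega : 3 ≤ p)
  set Q : ℝ := (p : ℝ) ^ (-2 * s) with hQdef
  have hQ : 0 < Q := Real.rpow_pos_of_pos hp0 _
  have hQ8 : Q ≤ ((p : ℝ) ^ 8)⁻¹ := by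
    rw [hQdef, ← Real.rpow_natCast, ← Real.rpow_neg hp0.le]
    exact Real.rpow_le_rpow_of_exponent_le (by linarith) (by push_cast; linarith)
  have hMQ : (2 * (p : ℝ) + 2) ^ 2 * Q < 1 := by
    have h1 : (2 * (p : ℝ) + 2) ≤ (p : ℝ) ^ 2 := by nlinarith
    have h2 : (2 * (p : ℝ) + 2) ^ 2 ≤ ((p : ℝ) ^ 2) ^ 2 := pow_le_pow_left₀ (by positivity) h1 2
    calc (2 * (p : ℝ) + 2) ^ 2 * Q ≤ ((p : ℝ) ^ 2) ^ 2 * ((p : ℝ) ^ 8)⁻¹ :=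
          mul_le_mul h2 hQ8 hQ.le (by positivity)
      _ = ((p : ℝ) ^ 4)⁻¹ := by field_simp
      _ < 1 := inv_lt_one_of_one_lt₀ (one_lt_pow₀ (by linarith) (by norm_num))
  let c : ℕ → ℝ := fun l => β l * (p : ℝ) ^ l
  obtain ⟨sx, sy, hsum⟩ := double_sum (q := p) (lam := lam) (by linarith) hlam rfl hQ hMQ c
    (by simp [c, hβ0]) (by simp only [c, hβ1, pow_one]; field_simp) (by
      intro n
      simp only [c]
      linear_combination (p : ℝ) ^ (n + 1) * hrec n)
  set x : ℕ × ℕ → ℝ := fun z => c (z.1 + z.2) * c z.2 * Q ^ (z.1 + z.2)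
  set y : ℕ × ℕ → ℝ := fun z => c (z.1 + 1 + z.2) * c z.2 * Q ^ (z.1 + 1 + z.2)
  refine ⟨_, hsum, ?_⟩
  have I : ∀ σ : ℝ, ∫⁻ v in LL p, Hv (fun a b => ENNReal.ofReal (σ * (β a * β b))) s (d : ℚ_[p]) v ∂μ =
      ZZ p (2 * s - 2) * ENNReal.ofReal (1 + (p : ℝ)⁻¹) *
      (∑' z, ENNReal.ofReal (σ * (KK p s * x z)) + ∑' z, ENNReal.ofReal (σ * (KK p s * y z))) := by
    intro σ
    rw [main_lint hp _ (fun a b => by rw [mul_comm (β a)]) s (by linarith) _ hd μ hμ]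
    congr 1
    simp only [TT_real (fun a b => σ * (β a * β b)) s]
    rw [ENNReal.tsum_prod', ENNReal.tsum_prod']
    congr 1 <;>
    · refine tsum_congr fun i => tsum_congr fun l => ?_
      congr 1
      simp only [x, y, c]
      ring
  have hKx := sx.mul_left (KK p s)
  have hKy := sy.mul_left (KK p s)
  obtain ⟨tx, ex⟩ := pm_sum hKx
  obtain ⟨ty, ey⟩ := pm_sum hKy
  obtain ⟨tx', -⟩ := pm_sum hKx.neg
  obtain ⟨ty', -⟩ := pm_sum hKy.neg
  have hZ : ZZ p (2 * s - 2) ≠ ∞ := by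
    rw [ZZ_val _ (by linarith)]; exact ENNReal.ofReal_ne_top
  have I1 := I 1
  have I2 := I (-1)
  simp only [one_mul, neg_one_mul] at I1 I2
  have L1 := lint_Fm d hd μ (fun a b => β a * β b) s
  have L2 := lint_Fm d hd μ (fun a b => -(β a * β b)) s
  rw [I1] at L1
  rw [I2] at L2
  have N : ∀ v, Fm p (fun a b => -(β a * β b)) s v = - Fm p (fun a b => β a * β b) s v := by
    intro v; unfold Fm; ring
  simp only [N] at L2
  have f1 : ZZ p (2 * s - 2) * ENNReal.ofReal (1 + (p : ℝ)⁻¹) ≠ ∞ :=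
    ENNReal.mul_ne_top hZ ENNReal.ofReal_ne_top
  obtain ⟨G1, G2⟩ := intgl (μ.restrict (Vd p d)) (Fm p (fun a b => β a * β b) s) (meas_Fm _ _)
    (by rw [L1]; exact ENNReal.mul_ne_top f1 (ENNReal.add_ne_top.2 ⟨tx, ty⟩))
    (by rw [L2]; exact ENNReal.mul_ne_top f1 (ENNReal.add_ne_top.2 ⟨tx', ty'⟩))
  have eqon : Set.EqOn (fs p d β s) (Fm p (fun a b => β a * β b) s) (Vd p d) :=
    fun v hv => fs_eq hp d hd β s hv
  refine ⟨(integrableOn_congr_fun eqon (Vd_meas d hd)).2 G1, ?_⟩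
  rw [setIntegral_congr_fun (Vd_meas d hd) eqon, G2, L1, L2, ENNReal.toReal_mul, ENNReal.toReal_mul,
    ENNReal.toReal_mul (b := _ + _), ENNReal.toReal_mul, ENNReal.toReal_add tx ty,
    ENNReal.toReal_add tx' ty', ENNReal.toReal_ofReal (by positivity)]
  rw [tsum_mul_left] at ex ey
  linear_combination ((ZZ p (2 * s - 2)).toReal * (1 + (p : ℝ)⁻¹)) * (ex + ey)

end Z19

/-- the ramified case (`|d|_p = 1/p`): explicit value of the local zeta
integral `∫_{V_d(ℤ_p)} f_s`. -/
theorem stmt19 (p : ℕ) [Fact p.Prime] (hp : Odd p) (q lam : ℝ) (hq : q = p)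
    (hlam : |lam| ≤ q + 1)
    (d : ℤ_[p]) (hd : ‖(d : ℚ_[p])‖ = (p : ℝ)⁻¹)
    (β : ℕ → ℝ) (hβ0 : β 0 = 1) (hβ1 : β 1 = (lam - 1) / q)
    (hrec : ∀ k : ℕ, q * β (k + 2) - lam * β (k + 1) + β k = 0)
    (μ : Measure (VV p)) [μ.IsAddHaarMeasure]
    (hμ : μ {v : VV p | (∀ i j, ‖v.1 i j‖ ≤ 1) ∧ (∀ i j, ‖v.2 i j‖ ≤ 1)} = 1) :
    ∃ s₀ : ℝ, ∀ s : ℝ, s₀ < s →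
      IntegrableOn (fs p d β s) (Vd p d) μ ∧
      ∫ v in Vd p d, fs p d β s v ∂μ =
        (1 / 2) * (1 - q⁻¹) * (1 - q⁻¹ ^ 2) ^ 3 * q ^ (1 - s) *
          (1 - q ^ (1 - 2 * s))⁻¹ *
          (1 - (q⁻¹ * lam ^ 2 - 1) * q ^ (1 - 2 * s) +
              (q⁻¹ * lam ^ 2 - 1) * q ^ (2 - 4 * s) - q ^ (3 - 6 * s))⁻¹ *
          (1 + q ^ (1 - 2 * s)) := by
  have hp0 : (0 : ℝ) < p := Z19.p_pos
  have hp1 : (1 : ℝ) < p := Z19.p_gt_one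
  subst hq
  refine ⟨4, fun s hs => ?_⟩
  obtain ⟨X, hX, hI, hv⟩ := Z19.main_val hp lam hlam d hd β hβ0 hβ1 hrec μ hμ s hs
  refine ⟨hI, ?_⟩
  rw [hv, Z19.ZZ_val _ (by linarith)]
  have hi0 : (0 : ℝ) < (p : ℝ)⁻¹ := inv_pos.2 hp0
  have hi1 : (p : ℝ)⁻¹ < 1 := inv_lt_one_of_one_lt₀ hp1
  set Q : ℝ := (p : ℝ) ^ (-2 * s) with hQ
  have hQ0 : 0 < Q := Real.rpow_pos_of_pos hp0 _
  have et : (p : ℝ) ^ (1 - 2 * s) = p * Q := by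
    rw [sub_eq_add_neg, Real.rpow_add hp0, Real.rpow_one, hQ, neg_mul]
  have et2 : (p : ℝ) ^ (2 - 4 * s) = (p * Q) ^ 2 := by
    rw [← et, ← Real.rpow_natCast, ← Real.rpow_mul hp0.le]; congr 1; push_cast; ring
  have et3 : (p : ℝ) ^ (3 - 6 * s) = (p * Q) ^ 3 := by
    rw [← et, ← Real.rpow_natCast, ← Real.rpow_mul hp0.le]; congr 1; push_cast; ring
  have ei : (p : ℝ)⁻¹ ^ (2 * s - 2) = p ^ 2 * Q := by
    rw [Real.inv_rpow hp0.le, ← Real.rpow_neg hp0.le, show -(2 * s - 2) = 2 + -2 * s by ring,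
      Real.rpow_add hp0, Real.rpow_two]
  have ht1 : p * Q < 1 := by
    rw [← et]; exact Real.rpow_lt_one_of_one_lt_of_neg hp1 (by linarith)
  have hQ1 : Q < 1 := Real.rpow_lt_one_of_one_lt_of_neg hp1 (by linarith)
  have ht0 : 0 < p * Q := mul_pos hp0 hQ0
  rw [ei, et, et2, et3]
  have a1 : (p : ℝ)⁻¹ * (p ^ 2 * Q) = p * Q := by field_simp
  have a2 : (p : ℝ)⁻¹ ^ 2 * (p ^ 2 * Q) = Q := by field_simp
  rw [a1, a2]
  have n1 : 1 - p * Q ≠ 0 := by linarith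
  have n2 : 1 - Q ≠ 0 := by linarith
  have hne : (1 - p * Q) * ((1 + p * Q) ^ 2 - lam ^ 2 * Q) ≠ 0 := by
    intro h0
    rw [h0, mul_zero] at hX
    have : (1 - Q) * (1 + p * Q) ≠ 0 := mul_ne_zero n2 (by linarith)
    exact this hX.symm
  have hden : 1 - ((p : ℝ)⁻¹ * lam ^ 2 - 1) * (p * Q) + ((p : ℝ)⁻¹ * lam ^ 2 - 1) * (p * Q) ^ 2 -
      (p * Q) ^ 3 = (1 - p * Q) * ((1 + p * Q) ^ 2 - lam ^ 2 * Q) := by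
    field_simp
    ring
  rw [hden]
  have hXv : X = (1 - Q) * (1 + p * Q) * ((1 - p * Q) * ((1 + p * Q) ^ 2 - lam ^ 2 * Q))⁻¹ := by
    rw [← hX, mul_assoc, mul_inv_cancel₀ hne, mul_one]
  have h2 : (0 : ℝ) ≤ 1 - (p : ℝ)⁻¹ ^ 2 := by nlinarith
  rw [ENNReal.toReal_ofReal (div_nonneg (mul_nonneg (by linarith) h2)
    (mul_nonneg (by linarith) (by linarith))), hXv]
  generalize ((1 - p * Q) * ((1 + p * Q) ^ 2 - lam ^ 2 * Q))⁻¹ = D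
  unfold Z19.KK
  field_simp
  ring
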